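/- Every planar graph G admits a planar drawing in which the cycle bounding the outer face has no chords. -/

import Mathlib

open Set

universe u

/-- A topological embedding of a simple graph in the plane: vertices are mapped to
distinct points and every edge is realized by a simple arc joining the images of its
endpoints, such that two arcs of distinct edges meet only in common endpoints and no
vertex point lies in the interior of an arc. -/
structure PlaneEmbedding {V : Type u} (G : SimpleGraph V) where
  pos : V → ℝ × ℝ
  pos_inj : Function.Injective pos
  arc : ∀ ⦃u v : V⦄, G.Adj u v → Set (ℝ × ℝ)
  arc_symm : ∀ ⦃u v : V⦄ (h : G.Adj u v), arc h.symm = arc h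
  arc_curve : ∀ ⦃u v : V⦄ (h : G.Adj u v), ∃ f : ℝ → ℝ × ℝ,
    ContinuousOn f (Set.Icc 0 1) ∧ Set.InjOn f (Set.Icc 0 1) ∧
    f 0 = pos u ∧ f 1 = pos v ∧ f '' Set.Icc 0 1 = arc h
  arc_inter : ∀ ⦃u v w z : V⦄ (h₁ : G.Adj u v) (h₂ : G.Adj w z),
    s(u, v) ≠ s(w, z) → arc h₁ ∩ arc h₂ ⊆ ({pos u, pos v} ∩ {pos w, pos z} : Set (ℝ × ℝ))
  pos_arc : ∀ ⦃u v : V⦄ (h : G.Adj u v) (w : V), pos w ∈ arc h → w = u ∨ w = v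

/-- A graph is planar if it admits a topological embedding in the plane. -/
def SimpleGraph.IsPlanar {V : Type u} (G : SimpleGraph V) : Prop :=
  Nonempty (PlaneEmbedding G)

/-- The point set covered by a plane embedding. -/
def PlaneEmbedding.drawing {V : Type u} {G : SimpleGraph V} (E : PlaneEmbedding G) :
    Set (ℝ × ℝ) :=
  Set.range E.pos ∪ ⋃ (u : V) (v : V) (h : G.Adj u v), E.arc h

/-- A face of a plane embedding is a connected component of the complement of the drawing. -/
def PlaneEmbedding.IsFace {V : Type u} {G : SimpleGraph V} (E : PlaneEmbedding G)
    (F : Set (ℝ × ℝ)) : Prop :=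
  ∃ p, p ∉ E.drawing ∧ F = connectedComponentIn E.drawingᶜ p

/-- A vertex is incident to a face if its point lies on the boundary of the face. -/
def PlaneEmbedding.VertexOnFace {V : Type u} {G : SimpleGraph V} (E : PlaneEmbedding G)
    (v : V) (F : Set (ℝ × ℝ)) : Prop :=
  E.pos v ∈ closure F

/-- Maximum degree at most `d`. -/
def SimpleGraph.MaxDegreeLE {V : Type u} (G : SimpleGraph V) (d : ℕ) : Prop :=
  ∀ v : V, (G.neighborSet v).ncard ≤ d

/-- A graph is triconnected (3-connected) if it has more than three vertices, is
connected, and stays connected after removing any two vertices. -/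
def SimpleGraph.IsTriconnected {V : Type u} (G : SimpleGraph V) : Prop :=
  3 < Nat.card V ∧ G.Connected ∧
    ∀ u v : V, (G.induce {w : V | w ≠ u ∧ w ≠ v}).Connected

/-- A graph is biconnected (2-connected) if it has more than two vertices, is
connected, and stays connected after removing any single vertex. -/
def SimpleGraph.IsBiconnected {V : Type u} (G : SimpleGraph V) : Prop :=
  2 < Nat.card V ∧ G.Connected ∧ ∀ u : V, (G.induce {w : V | w ≠ u}).Connected

/-- A graph is subhamiltonian if it is a spanning subgraph of a planar hamiltonian graph. -/
def SimpleGraph.IsSubhamiltonian {V : Type u} [Fintype V] (G : SimpleGraph V) : Prop :=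
  ∃ H : SimpleGraph V, G ≤ H ∧ H.IsPlanar ∧ (letI := Classical.decEq V; H.IsHamiltonian)

/-- The graph consisting of the edges of the cyclic vertex sequence `σ`. -/
def cyclicSuccGraph {W : Type u} (σ : ZMod (Nat.card W) ≃ W) : SimpleGraph W :=
  SimpleGraph.fromRel fun u v => ∃ i, u = σ i ∧ v = σ (i + 1)

/-- The cyclic ordering `σ` of all vertices of `G` is a subhamiltonian cycle for `G` if
adding the edges between consecutive vertices of `σ` keeps the graph planar. -/
def SimpleGraph.IsSubhamiltonianCycle {W : Type u} (G : SimpleGraph W)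
    (σ : ZMod (Nat.card W) ≃ W) : Prop :=
  SimpleGraph.IsPlanar (G ⊔ cyclicSuccGraph σ)

/-- The edges (pairs of consecutive vertices) of the cyclic sequence `σ`. -/
def cycleEdges {W : Type u} (σ : ZMod (Nat.card W) ≃ W) : Set (Sym2 W) :=
  {e | ∃ i, e = s(σ i, σ (i + 1))}

/-- The subhamiltonian cycle `σ` crosses the face `F` at position `i` if the two
consecutive vertices `σ i` and `σ (i+1)` are both incident to `F` but not adjacent. -/
def CrossesFaceAt {V : Type u} {G : SimpleGraph V} (E : PlaneEmbedding G)
    (σ : ZMod (Nat.card V) ≃ V) (F : Set (ℝ × ℝ)) (i : ZMod (Nat.card V)) : Prop :=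
  E.VertexOnFace (σ i) F ∧ E.VertexOnFace (σ (i + 1)) F ∧ ¬ G.Adj (σ i) (σ (i + 1))

/-- A separating triangle: a triangle whose removal disconnects the graph. -/
def SimpleGraph.IsSepTriangle {V : Type u} (G : SimpleGraph V) (a b c : V) : Prop :=
  G.Adj a b ∧ G.Adj b c ∧ G.Adj a c ∧
    ¬ (G.induce {v : V | v ≠ a ∧ v ≠ b ∧ v ≠ c}).Connected

section Triangle

variable {V : Type u} {G : SimpleGraph V} (E : PlaneEmbedding G) {a b c : V}

/-- The Jordan curve formed by the drawing of the triangle `a b c`. -/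
def triangleDrawing (hab : G.Adj a b) (hbc : G.Adj b c) (hac : G.Adj a c) :
    Set (ℝ × ℝ) :=
  E.arc hab ∪ E.arc hbc ∪ E.arc hac

/-- The vertices strictly inside the triangle `a b c` (bounded side of the Jordan curve). -/
def insideTriangle (hab : G.Adj a b) (hbc : G.Adj b c) (hac : G.Adj a c) : Set V :=
  {v | v ≠ a ∧ v ≠ b ∧ v ≠ c ∧
    Bornology.IsBounded
      (connectedComponentIn (triangleDrawing E hab hbc hac)ᶜ (E.pos v))}

/-- The vertices strictly outside the triangle `a b c` (unbounded side of the Jordan curve). -/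
def outsideTriangle (hab : G.Adj a b) (hbc : G.Adj b c) (hac : G.Adj a c) : Set V :=
  {v | v ≠ a ∧ v ≠ b ∧ v ≠ c ∧
    ¬ Bornology.IsBounded
      (connectedComponentIn (triangleDrawing E hab hbc hac)ᶜ (E.pos v))}

end Triangle

/-- The point set covered by the drawing of the edges of a closed walk. -/
def cycleDrawing {V : Type u} {G : SimpleGraph V} (E : PlaneEmbedding G) {v0 : V}
    (w : G.Walk v0 v0) : Set (ℝ × ℝ) :=
  {p | ∃ (u v : V) (h : G.Adj u v), s(u, v) ∈ w.edges ∧ p ∈ E.arc h}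

theorem lift_log {A : Type*} [TopologicalSpace A] (H : unitInterval × A → ℂ) (hH : Continuous H)
    (h0 : ∀ x, H x ≠ 0) (f : A → ℂ) (hf : Continuous f)
    (hf0 : ∀ a, Complex.exp (f a) = H (0, a)) :
    ∃ L : unitInterval × A → ℂ, Continuous L ∧ ∀ x, Complex.exp (L x) = H x := by
  let H' : C(unitInterval × A, {z : ℂ // z ≠ 0}) :=
    ⟨fun x => ⟨H x, h0 x⟩, by fun_prop⟩
  have h := Complex.isCoveringMap_exp.liftHomotopy_lifts H' ⟨f, hf⟩
    (by intro a; apply Subtype.ext; exact (hf0 a).symm)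
  refine ⟨_, (Complex.isCoveringMap_exp.liftHomotopy H' ⟨f, hf⟩
    (by intro a; apply Subtype.ext; exact (hf0 a).symm)).continuous, fun x => ?_⟩
  have := congrFun h x
  exact congrArg Subtype.val this

theorem exp_eq_const {X : Type*} [TopologicalSpace X] {S : Set X} (hS : IsPreconnected S)
    {f g : X → ℂ} (hf : ContinuousOn f S) (hg : ContinuousOn g S)
    (h : ∀ x ∈ S, Complex.exp (f x) = Complex.exp (g x)) :
    ∃ c, Complex.exp c = 1 ∧ ∀ x ∈ S, f x = g x + c := by
  rcases S.eq_empty_or_nonempty with rfl | ⟨a, ha⟩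
  · exact ⟨0, by simp, by simp⟩
  have hc : Complex.exp (f a - g a) = 1 := by
    rw [Complex.exp_sub, h a ha, div_self (Complex.exp_ne_zero _)]
  refine ⟨f a - g a, hc, fun x hx => ?_⟩
  refine Complex.isCoveringMap_exp.eqOn_of_comp_eqOn hS hf
    (hg.add continuousOn_const) ?_ ha (by simp) hx
  intro y hy
  apply Subtype.ext
  simp [Complex.exp_add, hc, h y hy]

theorem no_log_sphere (a : ℂ) (R : ℝ) (hR : 0 < R) (M : ℂ → ℂ)
    (hM : ContinuousOn M (Metric.sphere a R))
    (h : ∀ z ∈ Metric.sphere a R, Complex.exp (M z) = z - a) : False := by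
  let s : ℝ → ℂ := fun θ => a + R * Complex.exp (θ * Complex.I)
  have hs : Continuous s := by fun_prop
  have hmem : ∀ θ, s θ ∈ Metric.sphere a R := by
    intro θ
    simp [s, Complex.norm_exp_ofReal_mul_I, abs_of_pos hR]
  obtain ⟨c, -, hc⟩ := exp_eq_const (S := (univ : Set ℝ)) isPreconnected_univ
    (f := fun θ => M (s θ)) (g := fun θ => Real.log R + θ * Complex.I)
    (hM.comp hs.continuousOn (fun θ _ => hmem θ)) (by fun_prop) (by
      intro θ _
      rw [h _ (hmem θ), Complex.exp_add, ← Complex.ofReal_exp, Real.exp_log hR]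
      simp [s])
  have h1 := hc 0 trivial
  have h2 := hc (2 * Real.pi) trivial
  have h3 : s (2 * Real.pi) = s 0 := by simp [s]
  simp only [h3] at h2
  rw [h1] at h2
  have : (2 * Real.pi : ℂ) * Complex.I = 0 := by
    have := h2.symm
    push_cast at this
    linear_combination this
  simp [Real.pi_ne_zero] at this

/-- log along a path -/
theorem log_off_path {a b : ℂ} {A : Set ℂ} (γ : Path a b) (hγ : ∀ t, γ t ∈ A) :
    ∃ L : ℂ → ℂ, ContinuousOn L Aᶜ ∧ ∀ z ∈ Aᶜ, Complex.exp (L z) = (z - b) / (z - a) := by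
  have hne : ∀ (t) (z : (Aᶜ : Set ℂ)), (z : ℂ) - γ t ≠ 0 := by
    intro t z h
    exact z.2 (by rw [sub_eq_zero.1 h]; exact hγ t)
  have ha : ∀ (z : (Aᶜ : Set ℂ)), (z : ℂ) - a ≠ 0 := fun z => by simpa using hne 0 z
  obtain ⟨L, hL, hL2⟩ := lift_log (A := (Aᶜ : Set ℂ))
    (fun x => ((x.2 : ℂ) - γ x.1) / (x.2 - a))
    (by
      refine Continuous.div (by fun_prop) (by fun_prop) (fun x => ha _))
    (fun x => div_ne_zero (hne _ _) (ha _)) (fun _ => 0) continuous_const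
    (by intro z; simp [div_self (ha z)])
  classical
  refine ⟨fun z => if h : z ∈ Aᶜ then L (1, ⟨z, h⟩) else 0, ?_, ?_⟩
  · rw [continuousOn_iff_continuous_domRestrict]
    have : (Aᶜ).domRestrict (fun z => if h : z ∈ Aᶜ then L (1, ⟨z, h⟩) else 0) =
        fun z => L (1, z) := by
      funext z
      have := z.2
      exact dif_pos this
    rw [this]
    fun_prop
  · intro z hz
    have : (if h : z ∈ Aᶜ then L (1, ⟨z, h⟩) else 0) = L (1, ⟨z, hz⟩) := dif_pos hz
    simp only [this]
    rw [hL2]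
    simp

theorem jordan_sep_C {a b : ℂ} (hab : a ≠ b) {A B : Set ℂ} (hA : IsClosed A) (hB : IsClosed B)
    (γ : Path a b) (hγ : ∀ t, γ t ∈ A) (δ : Path a b) (hδ : ∀ t, δ t ∈ B)
    (hAB : A ∩ B ⊆ {a, b}) : ¬ IsPreconnected (A ∪ B)ᶜ := by
  intro hpre
  obtain ⟨L, hL, hL2⟩ := log_off_path γ hγ
  obtain ⟨M, hM, hM2⟩ := log_off_path δ hδ
  obtain ⟨c, hc1, hc⟩ := exp_eq_const hpre
    (hL.mono (by intro x hx h; exact hx (.inl h)))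
    (hM.mono (by intro x hx h; exact hx (.inr h))) (by
      intro x hx
      rw [hL2 x (fun h => hx (.inl h)), hM2 x (fun h => hx (.inr h))])
  classical
  let N : ℂ → ℂ := fun z => if z ∈ A then M z + c else L z
  have hNA : ∀ z ∉ A, N z = L z := fun z hz => if_neg hz
  have hNB : ∀ z ∉ B, N z = M z + c := by
    intro z hz
    by_cases h : z ∈ A
    · exact if_pos h
    · rw [hNA z h]; exact hc z (by simp [h, hz])
  have hcont : ∀ z, z ≠ a → z ≠ b → ContinuousAt N z := by
    intro z hza hzb
    by_cases h : z ∈ A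
    · have hzB : z ∉ B := fun hB => by
        rcases hAB ⟨h, hB⟩ with h | h
        exacts [hza h, hzb h]
      have : ContinuousAt (fun z => M z + c) z :=
        (hM.continuousAt (hB.isOpen_compl.mem_nhds hzB)).add continuousAt_const
      refine this.congr ?_
      filter_upwards [hB.isOpen_compl.mem_nhds hzB] with y hy using (hNB y hy).symm
    · refine (hL.continuousAt (hA.isOpen_compl.mem_nhds h)).congr ?_
      filter_upwards [hA.isOpen_compl.mem_nhds h] with y hy using (hNA y hy).symm
  have hexp : ∀ z, z ≠ a → z ≠ b → Complex.exp (N z) = (z - b) / (z - a) := by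
    intro z hza hzb
    by_cases h : z ∈ A
    · have hzB : z ∉ B := fun hB => by
        rcases hAB ⟨h, hB⟩ with h | h
        exacts [hza h, hzb h]
      rw [hNB z hzB, Complex.exp_add, hc1, mul_one, hM2 z hzB]
    · rw [hNA z h, hL2 z h]
  have hab' : a - b ≠ 0 := sub_ne_zero.2 hab
  have hpos : 0 < ‖a - b‖ := norm_pos_iff.2 hab'
  have key : ∀ z ∈ Metric.sphere a (‖a - b‖ / 2), z ≠ a ∧ z ≠ b ∧ 1 + (z - a) / (a - b) ∈ Complex.slitPlane := by
    intro z hz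
    have hz' : ‖z - a‖ = ‖a - b‖ / 2 := by simpa [dist_eq_norm] using hz
    refine ⟨?_, ?_, ?_⟩
    · rintro rfl; rw [sub_self, norm_zero] at hz'; linarith
    · rintro rfl; rw [norm_sub_rev] at hz'; linarith
    · apply Complex.mem_slitPlane_of_norm_lt_one
      rw [norm_div, hz', div_div, mul_comm, ← div_div, div_self hpos.ne']; norm_num
  refine no_log_sphere a (‖a - b‖ / 2) (by positivity)
    (fun z => Complex.log (a - b) + Complex.log (1 + (z - a) / (a - b)) - N z) ?_ ?_
  · refine ContinuousOn.sub (continuousOn_const.add (ContinuousOn.clog (by fun_prop) fun z hz => (key z hz).2.2)) ?_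
    intro z hz
    exact (hcont z (key z hz).1 (key z hz).2.1).continuousWithinAt
  · intro z hz
    obtain ⟨h1, h2, h3⟩ := key z hz
    rw [Complex.exp_sub, Complex.exp_add, Complex.exp_log hab', Complex.exp_log (Complex.slitPlane_ne_zero h3), hexp z h1 h2]
    have h1' := sub_ne_zero.2 h1
    have h2' := sub_ne_zero.2 h2
    field_simp
    ring

/-- every nonvanishing continuous function on K has a logarithm -/
def LogProp {X : Type*} [TopologicalSpace X] (K : Set X) : Prop :=
  ∀ f : X → ℂ, ContinuousOn f K → (∀ x ∈ K, f x ≠ 0) →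
    ∃ g : X → ℂ, ContinuousOn g K ∧ ∀ x ∈ K, Complex.exp (g x) = f x

theorem no_bdd_comp {K : Set ℂ} (hK : IsCompact K) (hlog : LogProp K) {p : ℂ} (hp : p ∉ K)
    (hb : Bornology.IsBounded (connectedComponentIn Kᶜ p)) : False := by
  set U := connectedComponentIn Kᶜ p with hU
  have hUo : IsOpen U := hK.isClosed.isOpen_compl.connectedComponentIn
  have hpU : p ∈ U := mem_connectedComponentIn hp
  have hfr : frontier U ⊆ K := by
    intro x hx
    by_contra hxK
    have h1 : x ∈ closure U := hx.1
    have hVo : IsOpen (connectedComponentIn Kᶜ x) := hK.isClosed.isOpen_compl.connectedComponentIn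
    obtain ⟨y, hy1, hy2⟩ := mem_closure_iff.1 h1 _ hVo (mem_connectedComponentIn hxK)
    have e1 := connectedComponentIn_eq hy1
    have e2 := connectedComponentIn_eq hy2
    have : x ∈ U := by rw [hU, e2, ← e1]; exact mem_connectedComponentIn hxK
    rw [hUo.frontier_eq] at hx
    exact hx.2 this
  obtain ⟨g, hg, hg2⟩ := hlog (fun z => z - p) (by fun_prop)
    (fun x hx h => hp (by rw [← sub_eq_zero.1 h]; exact hx))
  obtain ⟨G, hG⟩ := ContinuousMap.exists_restrict_eq hK.isClosed ⟨K.domRestrict g, hg.domRestrict⟩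
  have hG' : ∀ x ∈ K, G x = g x := fun x hx => by
    have := congrArg (fun f => f ⟨x, hx⟩) hG
    exact this
  classical
  let F : ℂ → ℂ := fun z => if z ∈ U then Complex.exp (G z) else z - p
  have hF : Continuous F := by
    apply Continuous.if
    · intro z hz
      have : z ∈ K := hfr hz
      rw [hG' z this, hg2 z this]
    · fun_prop
    · fun_prop
  have hF0 : ∀ z, F z ≠ 0 := by
    intro z
    by_cases h : z ∈ U
    · simp only [F, if_pos h]; exact Complex.exp_ne_zero _
    · simp only [F, if_neg h]; intro h'; exact h (by rw [sub_eq_zero.1 h']; exact hpU)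
  obtain ⟨L, hL, hL2⟩ := lift_log (A := ℂ) (fun x => F (p + (x.1 : ℝ) * (x.2 - p)))
    (by fun_prop) (fun x => hF0 _) (fun _ => Complex.log (F p)) continuous_const
    (by intro a; simp [Complex.exp_log (hF0 p)])
  obtain ⟨R, hR⟩ := hb.subset_ball p
  have hR0 : 0 < R := by
    have := hR hpU
    simpa using this
  refine no_log_sphere p R hR0 (fun z => L (1, z)) (by fun_prop) ?_
  intro z hz
  rw [hL2]
  have : z ∉ U := fun h => by
    have := hR h
    rw [Metric.mem_sphere] at hz
    rw [Metric.mem_ball] at this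
    linarith
  simp [F, this]

theorem exists_far {U : Set ℂ} (h : ¬ Bornology.IsBounded U) (R : ℝ) : ∃ z ∈ U, R < ‖z‖ := by
  by_contra! h'
  exact h ((Metric.isBounded_closedBall (x := (0 : ℂ)) (r := R)).subset
    (fun z hz => by simpa using h' z hz))

theorem preconn_far (R : ℝ) : IsPreconnected {z : ℂ | R < ‖z‖} := by
  rcases lt_or_ge R 0 with h | h
  · have : {z : ℂ | R < ‖z‖} = univ := by
      ext z; simp; linarith [norm_nonneg z]
    rw [this]; exact isPreconnected_univ
  have : {z : ℂ | R < ‖z‖} = (fun x : ℝ × ℝ => (x.1 : ℂ) * Complex.exp (x.2 * Complex.I)) '' (Ioi R ×ˢ univ) := by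
    ext z
    constructor
    · intro hz
      exact ⟨(‖z‖, z.arg), ⟨hz, trivial⟩, Complex.norm_mul_exp_arg_mul_I z⟩
    · rintro ⟨⟨x, y⟩, ⟨hx, -⟩, rfl⟩
      simp only [mem_ofPred_eq, norm_mul, Complex.norm_exp_ofReal_mul_I, mul_one, Complex.norm_real, Real.norm_eq_abs]
      exact lt_of_lt_of_le hx (le_abs_self _)
  rw [this]
  exact (isPreconnected_Ioi.prod isPreconnected_univ).image _ (by fun_prop)

theorem compl_preconn_C {K : Set ℂ} (hK : IsCompact K) (hlog : LogProp K) :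
    IsPreconnected Kᶜ := by
  obtain ⟨R, hR⟩ := hK.isBounded.subset_closedBall (0 : ℂ)
  rcases (Kᶜ).eq_empty_or_nonempty with h | ⟨p, hp⟩
  · rw [h]; exact isPreconnected_empty
  have key : ∀ q ∈ Kᶜ, q ∈ connectedComponentIn Kᶜ p := by
    intro q hq
    obtain ⟨z, hz, hzR⟩ := exists_far (no_bdd_comp hK hlog hp) R
    obtain ⟨w, hw, hwR⟩ := exists_far (no_bdd_comp hK hlog hq) R
    have hsub : {z : ℂ | R < ‖z‖} ⊆ connectedComponentIn Kᶜ z :=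
      (preconn_far R).subset_connectedComponentIn hzR (fun y hy hyK => by
        have := hR hyK
        simp at this hy
        linarith)
    have h1 := connectedComponentIn_eq (hsub hwR)
    have h2 := connectedComponentIn_eq hz
    have h3 := connectedComponentIn_eq hw
    rw [h2, h1, ← h3]
    exact mem_connectedComponentIn hq
  have : Kᶜ = connectedComponentIn Kᶜ p :=
    subset_antisymm key (connectedComponentIn_subset _ _)
  rw [this]
  exact isPreconnected_connectedComponentIn

theorem logProp_range {X : Type*} [TopologicalSpace X] [T2Space X] (φ : unitInterval → X)
    (hφ : Continuous φ) (hinj : Function.Injective φ) : LogProp (range φ) := by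
  intro k hk hk0
  have hemb : Topology.IsClosedEmbedding φ := hφ.isClosedEmbedding hinj
  let e := hemb.isEmbedding.toHomeomorph
  have hkφ : Continuous (fun t => k (φ t)) :=
    hk.comp_continuous hφ (fun t => mem_range_self t)
  have h0 : ∀ t, k (φ t) ≠ 0 := fun t => hk0 _ (mem_range_self t)
  obtain ⟨L, hL, hL2⟩ := lift_log (A := Unit) (fun x => k (φ x.1)) (hkφ.comp continuous_fst) (fun x => h0 _)
    (fun _ => Complex.log (k (φ 0))) continuous_const (fun _ => Complex.exp_log (h0 0))
  classical
  have hg : ∀ y (hy : y ∈ range φ), (if h : y ∈ range φ then L (e.symm ⟨y, h⟩, ()) else 0) =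
      L (e.symm ⟨y, hy⟩, ()) := fun y hy => dif_pos hy
  refine ⟨fun y => if h : y ∈ range φ then L (e.symm ⟨y, h⟩, ()) else 0, ?_, ?_⟩
  · rw [continuousOn_iff_continuous_domRestrict]
    have : (range φ).domRestrict (fun y => if h : y ∈ range φ then L (e.symm ⟨y, h⟩, ()) else 0) =
        fun y => L (e.symm y, ()) := by
      funext y
      exact hg y.1 y.2
    rw [this]
    fun_prop
  · intro y hy
    simp only [hg y hy]
    rw [hL2]
    have : φ (e.symm ⟨y, hy⟩) = y := by
      have := e.apply_symm_apply ⟨y, hy⟩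
      exact congrArg Subtype.val this
    simp [this]

theorem logProp_arc {X : Type*} [TopologicalSpace X] [T2Space X] (f : ℝ → X) {a b : ℝ}
    (hab : a < b) (hf : ContinuousOn f (Icc a b)) (hinj : InjOn f (Icc a b)) :
    LogProp (f '' Icc a b) := by
  have hm : ∀ t : unitInterval, a + t * (b - a) ∈ Icc a b := fun t => by
    have h1 := t.2.1
    have h2 := t.2.2
    constructor <;> nlinarith
  have := logProp_range (fun t : unitInterval => f (a + t * (b - a)))
    (hf.comp_continuous (by fun_prop) hm) (by
      intro s t hst
      have := hinj (hm s) (hm t) hst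
      have h2 : (s : ℝ) * (b - a) = t * (b - a) := by linarith
      exact Subtype.ext (mul_right_cancel₀ (by linarith) h2))
  convert this using 1
  ext y
  constructor
  · rintro ⟨t, ht, rfl⟩
    refine ⟨⟨(t - a) / (b - a), ?_, ?_⟩, ?_⟩
    · exact div_nonneg (by linarith [ht.1]) (by linarith)
    · rw [div_le_one (by linarith)]; linarith [ht.2]
    · have : b - a ≠ 0 := by linarith
      simp [this]
  · rintro ⟨t, rfl⟩
    exact ⟨_, hm t, rfl⟩

theorem LogProp.union {X : Type*} [TopologicalSpace X] {A B : Set X} (hA : LogProp A)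
    (hB : LogProp B) (hAc : IsClosed A) (hBc : IsClosed B) {c : X} (hcA : c ∈ A) (hcB : c ∈ B)
    (hAB : ∀ x ∈ A, x ∈ B → x = c) : LogProp (A ∪ B) := by
  intro k hk hk0
  obtain ⟨g, hg, hg2⟩ := hA k (hk.mono subset_union_left) (fun x hx => hk0 x (.inl hx))
  obtain ⟨g', hg', hg2'⟩ := hB k (hk.mono subset_union_right) (fun x hx => hk0 x (.inr hx))
  have hd : Complex.exp (g c - g' c) = 1 := by
    rw [Complex.exp_sub, hg2 c hcA, hg2' c hcB, div_self (hk0 c (.inl hcA))]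
  classical
  let F : X → ℂ := fun x => if x ∈ A then g x else g' x + (g c - g' c)
  have hFA : ∀ x ∈ A, F x = g x := fun x hx => if_pos hx
  have hFB : ∀ x ∈ B, F x = g' x + (g c - g' c) := by
    intro x hx
    by_cases h : x ∈ A
    · rw [hFA x h, hAB x h hx]; ring
    · exact if_neg h
  refine ⟨F, ContinuousOn.union_of_isClosed (hg.congr hFA)
    ((hg'.add continuousOn_const).congr hFB) hAc hBc, ?_⟩
  rintro x (hx | hx)
  · rw [hFA x hx, hg2 x hx]
  · rw [hFB x hx, Complex.exp_add, hd, mul_one, hg2' x hx]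

noncomputable def eRC : ℝ × ℝ ≃ₜ ℂ := Complex.equivRealProdCLM.symm.toHomeomorph

theorem compl_preconn {K : Set (ℝ × ℝ)} (hK : IsCompact K) (hlog : LogProp K) :
    IsPreconnected Kᶜ := by
  have h1 : LogProp (eRC '' K) := by
    intro f hf hf0
    obtain ⟨g, hg, hg2⟩ := hlog (fun x => f (eRC x))
      (hf.comp eRC.continuous.continuousOn (mapsTo_image _ _))
      (fun x hx => hf0 _ (mem_image_of_mem _ hx))
    refine ⟨fun z => g (eRC.symm z), hg.comp eRC.symm.continuous.continuousOn ?_, ?_⟩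
    · rintro _ ⟨x, hx, rfl⟩; simpa using hx
    · rintro _ ⟨x, hx, rfl⟩; simpa using hg2 x hx
  have h2 := compl_preconn_C (hK.image eRC.continuous) h1
  rw [← image_compl_eq eRC.bijective] at h2
  have := h2.image eRC.symm eRC.symm.continuous.continuousOn
  simpa [image_image] using this

theorem jordan_sep {a b : ℝ × ℝ} (hab : a ≠ b) {A B : Set (ℝ × ℝ)} (hA : IsClosed A)
    (hB : IsClosed B) (hγ : JoinedIn A a b) (hδ : JoinedIn B a b)
    (hAB : A ∩ B ⊆ {a, b}) : ¬ IsPreconnected (A ∪ B)ᶜ := by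
  intro h
  refine jordan_sep_C (fun h => hab (eRC.injective h)) (eRC.isClosedMap _ hA) (eRC.isClosedMap _ hB)
    (hγ.somePath.map eRC.continuous) (fun t => mem_image_of_mem _ (hγ.somePath_mem t))
    (hδ.somePath.map eRC.continuous) (fun t => mem_image_of_mem _ (hδ.somePath_mem t)) ?_ ?_
  · rintro _ ⟨⟨x, hx, rfl⟩, ⟨y, hy, hxy⟩⟩
    have := eRC.injective hxy
    subst this
    rcases hAB ⟨hx, hy⟩ with h | h
    · left; rw [h]
    · right; rw [h]; rfl
  · rw [← image_union, ← image_compl_eq eRC.bijective]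
    exact h.image _ eRC.continuous.continuousOn

section comps
variable {X : Type*} [TopologicalSpace X] [LocallyConnectedSpace X]

theorem frontier_comp_subset {C : Set X} (hC : IsClosed C) (p : X) :
    frontier (connectedComponentIn Cᶜ p) ⊆ C := by
  intro x hx
  by_contra hxK
  have hUo : IsOpen (connectedComponentIn Cᶜ p) := hC.isOpen_compl.connectedComponentIn
  have hVo : IsOpen (connectedComponentIn Cᶜ x) := hC.isOpen_compl.connectedComponentIn
  obtain ⟨y, hy1, hy2⟩ := mem_closure_iff.1 hx.1 _ hVo (mem_connectedComponentIn hxK)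
  have e1 := connectedComponentIn_eq hy1
  have e2 := connectedComponentIn_eq hy2
  have : x ∈ connectedComponentIn Cᶜ p := by rw [e2, ← e1]; exact mem_connectedComponentIn hxK
  rw [hUo.frontier_eq] at hx
  exact hx.2 this

theorem closure_comp_subset {C : Set X} (hC : IsClosed C) (p : X) :
    closure (connectedComponentIn Cᶜ p) ⊆ connectedComponentIn Cᶜ p ∪ C := by
  intro x hx
  by_cases h : x ∈ connectedComponentIn Cᶜ p
  · exact .inl h
  · right
    apply frontier_comp_subset hC p
    rw [(hC.isOpen_compl.connectedComponentIn).frontier_eq]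
    exact ⟨hx, h⟩

theorem eq_comp {C U : Set X} {p : X} (hU : IsOpen U) (hUc : IsPreconnected U)
    (hp : p ∈ U) (hUC : U ⊆ Cᶜ) (hfr : frontier U ⊆ C) : U = connectedComponentIn Cᶜ p := by
  apply subset_antisymm (hUc.subset_connectedComponentIn hp hUC)
  apply isPreconnected_connectedComponentIn.subset_of_closure_inter_subset hU
    ⟨p, mem_connectedComponentIn (hUC hp), hp⟩
  rintro x ⟨hx, hx2⟩
  by_contra h
  refine connectedComponentIn_subset _ _ hx2 (hfr ?_)
  rw [hU.frontier_eq]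
  exact ⟨hx, h⟩

end comps

section graph
variable {V : Type u} {G : SimpleGraph V}
open SimpleGraph

theorem cycle_split {v0 : V} {w : G.Walk v0 v0} (hw : w.IsCycle) {u v : V}
    (he : s(u, v) ∈ w.edges) :
    ∃ p : G.Walk v u, p.IsPath ∧ s(u, v) ∉ p.edges ∧
      ∀ e, e ∈ w.edges ↔ e = s(u, v) ∨ e ∈ p.edges := by
  classical
  have hu : u ∈ w.support := w.fst_mem_support_of_mem_edges he
  have hc : (w.rotate u hu).IsCycle := hw.rotate hu
  have hmem : ∀ e, e ∈ w.edges ↔ e ∈ (w.rotate u hu).edges := fun e =>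
    (w.rotate_edges u hu).perm.mem_iff.symm
  simp only [hmem] at he ⊢
  generalize w.rotate u hu = w' at *
  cases w' with
  | nil => simp at he
  | cons h q =>
    rename_i x
    rw [Walk.cons_isCycle_iff] at hc
    obtain ⟨hq, hqe⟩ := hc
    by_cases hxv : x = v
    · subst hxv
      exact ⟨q, hq, hqe, fun e => by simp⟩
    · have he' : s(u, v) ∈ q.edges := by
        rw [Walk.edges_cons, List.mem_cons] at he
        rcases he with he | he
        · exfalso
          rcases Sym2.eq_iff.1 he with ⟨-, h2⟩ | ⟨h1, h2⟩
          · exact hxv h2.symm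
          · exact hxv (h1 ▸ h2.symm)
        · exact he
      have hr := hq.reverse
      have her : ∀ e, e ∈ q.edges ↔ e ∈ q.reverse.edges := fun e => by simp
      simp only [Walk.edges_cons, List.mem_cons, her] at *
      generalize q.reverse = r at *
      cases r with
      | nil => simp at he'
      | cons h2 r =>
        rename_i y
        rw [Walk.cons_isPath_iff] at hr
        have hyv : y = v := by
          rw [Walk.edges_cons, List.mem_cons] at he'
          rcases he' with he | he
          · rcases Sym2.eq_iff.1 he with ⟨-, h2⟩ | ⟨h1, h2⟩
            · exact h2.symm
            · exact h1 ▸ h2.symm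
          · exact absurd (r.fst_mem_support_of_mem_edges he) hr.2
        subst hyv
        refine ⟨r.concat h.symm, hr.1.concat hr.2 _, ?_, ?_⟩
        · simp only [Walk.edges_concat, List.concat_eq_append, List.mem_append, List.mem_singleton]
          rintro (h' | h')
          · exact hr.2 (r.fst_mem_support_of_mem_edges h')
          · rcases Sym2.eq_iff.1 h' with ⟨h1, h2⟩ | ⟨h1, h2⟩
            · exact h.ne h1
            · exact hxv h2.symm
        · intro e
          simp only [Walk.edges_concat, List.concat_eq_append, List.mem_append, List.mem_singleton,
            Walk.edges_cons, List.mem_cons, Sym2.eq_swap (a := x) (b := u)]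
          tauto

/-- shortest cycle through a vertex is chordless -/
theorem exists_chordless (S : Set V) (x : V)
    (hex : ∃ w : G.Walk x x, w.IsCycle ∧ ∀ y ∈ w.support, y ∈ S) :
    ∃ w : G.Walk x x, w.IsCycle ∧ (∀ y ∈ w.support, y ∈ S) ∧
      ∀ u v : V, u ∈ w.support → v ∈ w.support → G.Adj u v → s(u, v) ∈ w.edges := by
  classical
  have hex' : ∃ n, ∃ w : G.Walk x x, (w.IsCycle ∧ ∀ y ∈ w.support, y ∈ S) ∧ w.length = n := by
    obtain ⟨w, hw⟩ := hex
    exact ⟨_, w, hw, rfl⟩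
  obtain ⟨w, ⟨hw, hwS⟩, hlen⟩ := Nat.find_spec hex'
  have hmin : ∀ (a : V) (w' : G.Walk a a), w'.IsCycle → (∀ y ∈ w'.support, y ∈ S) →
      x ∈ w'.support → w.length ≤ w'.length := by
    intro a w' h1 h2 h3
    rw [hlen]
    apply Nat.find_min' hex'
    exact ⟨w'.rotate x h3, ⟨h1.rotate h3, fun y hy => h2 y (by simpa using hy)⟩, by simp⟩
  refine ⟨w, hw, hwS, fun a b ha hb hab => ?_⟩
  by_contra hne
  have hc := hw.rotate ha
  have hb' : b ∈ (w.rotate a ha).support := by simpa using hb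
  have hl : (w.rotate a ha).length = w.length := by simp
  have hS : ∀ y ∈ (w.rotate a ha).support, y ∈ S := fun y hy => hwS y (by simpa using hy)
  have hx : x ∈ (w.rotate a ha).support := by simp
  have hne' : s(a, b) ∉ (w.rotate a ha).edges := fun h =>
    hne ((w.rotate_edges a ha).perm.mem_iff.1 h)
  generalize w.rotate a ha = w1 at *
  obtain ⟨p, q, rfl⟩ : ∃ (p : G.Walk a b) (q : G.Walk b a), w1 = p.append q :=
    ⟨w1.takeUntil b hb', w1.dropUntil b hb', (w1.take_spec hb').symm⟩
  have long : ∀ {c d : V} (r : G.Walk c d), c ≠ d → s(c, d) ∉ r.edges → 2 ≤ r.length := by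
    intro c d r hcd hr
    cases r with
    | nil => exact absurd rfl hcd
    | cons h r =>
      cases r with
      | nil => simp at hr
      | cons h' r => simp
  rw [Walk.edges_append, List.mem_append] at hne'
  push Not at hne'
  have hp2 := long p hab.ne hne'.1
  have hq2 := long q hab.ne.symm (by rw [Sym2.eq_swap]; exact hne'.2)
  have hpn : ¬ p.Nil := by rw [Walk.not_nil_iff_lt_length]; omega
  have hqn : ¬ q.Nil := by rw [Walk.not_nil_iff_lt_length]; omega
  have hpP := Walk.IsCycle.isPath_of_append_left hqn hc
  have hqP := Walk.IsCycle.isPath_of_append_right hpn hc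
  rw [Walk.length_append] at hl
  simp only [Walk.mem_support_append_iff] at hx hS
  rcases hx with hx | hx
  · have := hmin b (Walk.cons hab.symm p)
      ((Walk.cons_isCycle_iff _ _).2 ⟨hpP, by rw [Sym2.eq_swap]; exact hne'.1⟩)
      (by
        intro y hy
        rw [Walk.support_cons, List.mem_cons] at hy
        rcases hy with rfl | hy
        · exact hS _ (.inl p.end_mem_support)
        · exact hS _ (.inl hy))
      (by simp [hx])
    simp at this
    omega
  · have := hmin a (Walk.cons hab q)
      ((Walk.cons_isCycle_iff _ _).2 ⟨hqP, hne'.2⟩)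
      (by
        intro y hy
        rw [Walk.support_cons, List.mem_cons] at hy
        rcases hy with rfl | hy
        · exact hS _ (.inr q.end_mem_support)
        · exact hS _ (.inr hy))
      (by simp [hx])
    simp at this
    omega

theorem cycle_of_walk {S : Set V} {x y y' : V} (hx : x ∈ S) (hxy : G.Adj x y) (hxy' : G.Adj x y')
    (hyy : y ≠ y') (r : G.Walk y y') (hr : ∀ z ∈ r.support, z ∈ S ∧ z ≠ x) :
    ∃ w : G.Walk x x, w.IsCycle ∧ ∀ z ∈ w.support, z ∈ S := by
  classical
  have hb : ∀ z ∈ r.bypass.support, z ∈ S ∧ z ≠ x := fun z hz =>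
    hr z (r.support_bypass_subset_support hz)
  have hxr : x ∉ r.bypass.support := fun h => (hb x h).2 rfl
  refine ⟨Walk.cons hxy (r.bypass.concat hxy'.symm), ?_, ?_⟩
  · rw [Walk.cons_isCycle_iff]
    refine ⟨r.bypass_isPath.concat hxr _, ?_⟩
    simp only [Walk.edges_concat, List.concat_eq_append, List.mem_append, List.mem_singleton]
    rintro (h | h)
    · exact hxr (r.bypass.fst_mem_support_of_mem_edges h)
    · rcases Sym2.eq_iff.1 h with ⟨h1, h2⟩ | ⟨h1, h2⟩
      · exact hxy'.ne h1
      · exact hyy h2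
  · intro z hz
    simp only [Walk.support_cons, Walk.support_concat, List.concat_eq_append, List.mem_cons,
      List.mem_append, List.mem_singleton, List.not_mem_nil, or_false] at hz
    rcases hz with rfl | hz | rfl
    · exact hx
    · exact (hb z hz).1
    · exact hx

theorem walk_avoiding (hbic : ∀ u : V, (G.induce {w : V | w ≠ u}).Connected) (x y y' : V) (hy : y ≠ x) (hy' : y' ≠ x) :
    ∃ r : G.Walk y y', ∀ z ∈ r.support, z ≠ x := by
  have key : ∀ {a b : {w : V | w ≠ x}} (r : (G.induce {w : V | w ≠ x}).Walk a b),
      ∃ r : G.Walk a.1 b.1, ∀ z ∈ r.support, z ≠ x := by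
    intro a b r
    induction r with
    | nil =>
      rename_i a
      exact ⟨Walk.nil, by intro z hz; simp at hz; subst hz; exact a.2⟩
    | cons h r ih =>
      rename_i a b c
      obtain ⟨q, hq⟩ := ih
      have h' : G.Adj a.1 b.1 := h
      refine ⟨Walk.cons h' q, ?_⟩
      intro z hz
      rw [Walk.support_cons, List.mem_cons] at hz
      rcases hz with rfl | hz
      · exact a.2
      · exact hq z hz
  obtain ⟨r⟩ := (hbic x).preconnected ⟨y, hy⟩ ⟨y', hy'⟩
  exact key r

/-- pushing walks into S -/
theorem push_walk {S T : Set V} {x c0 : V} (hc0 : c0 ∈ S ∧ c0 ≠ x)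
    (hT : ∀ a ∈ S, ∀ b ∉ S, G.Adj a b → a ∈ T)
    (hconn : ∀ a ∈ T, ∃ r : G.Walk a c0, ∀ z ∈ r.support, z ∈ S ∧ z ≠ x)
    {y y' : V} (r : G.Walk y y') (hr : ∀ z ∈ r.support, z ≠ x) (hy' : y' ∈ S) :
    (y ∈ S → ∃ r : G.Walk y y', ∀ z ∈ r.support, z ∈ S ∧ z ≠ x) ∧
    (y ∉ S → ∃ r : G.Walk c0 y', ∀ z ∈ r.support, z ∈ S ∧ z ≠ x) := by
  induction r with
  | nil =>
    rename_i a
    refine ⟨fun h => ⟨Walk.nil, by intro z hz; simp at hz; subst hz; exact ⟨h, hr _ (by simp)⟩⟩, fun h => absurd hy' h⟩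
  | cons h p ih =>
    rename_i a b c
    have ih := ih (fun z hz => hr z (by simp [hz])) hy'
    have hax : a ≠ x := hr a (by simp)
    have hbx : b ≠ x := hr b (by simp)
    constructor
    · intro ha
      by_cases hb : b ∈ S
      · obtain ⟨r, hr⟩ := ih.1 hb
        refine ⟨Walk.cons h r, ?_⟩
        intro z hz
        rw [Walk.support_cons, List.mem_cons] at hz
        rcases hz with rfl | hz
        · exact ⟨ha, hax⟩
        · exact hr z hz
      · obtain ⟨r, hr⟩ := ih.2 hb
        obtain ⟨r', hr'⟩ := hconn a (hT a ha b hb h)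
        refine ⟨r'.append r, ?_⟩
        intro z hz
        rw [Walk.mem_support_append_iff] at hz
        exact hz.elim (hr' z) (hr z)
    · intro ha
      by_cases hb : b ∈ S
      · obtain ⟨r, hr⟩ := ih.1 hb
        obtain ⟨r', hr'⟩ := hconn b (hT b hb a ha h.symm)
        refine ⟨r'.reverse.append r, ?_⟩
        intro z hz
        rw [Walk.mem_support_append_iff, Walk.support_reverse, List.mem_reverse] at hz
        exact hz.elim (hr' z) (hr z)
      · exact ih.2 hb

theorem two_nbrs (hcard : 2 < Nat.card V) (hbic : ∀ u : V, (G.induce {w : V | w ≠ u}).Connected) (x : V) :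
    ∃ y y', y ≠ y' ∧ G.Adj x y ∧ G.Adj x y' := by
  have : Finite V := Nat.finite_of_card_ne_zero (by omega)
  -- a neighbour in G - c
  have key : ∀ c, c ≠ x → ∃ y, y ≠ c ∧ G.Adj x y := by
    intro c hc
    obtain ⟨d, hd⟩ : ∃ d, d ≠ c ∧ d ≠ x := by
      by_contra! h
      have : (univ : Set V) ⊆ {c, x} := fun d _ => by
        by_cases hd : d = c
        · simp [hd]
        · simp [h d hd]
      have h1 := Set.ncard_le_ncard this (by simp)
      rw [Set.ncard_univ] at h1
      have h2 := Set.ncard_insert_le c {x}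
      rw [Set.ncard_singleton] at h2
      omega
    obtain ⟨r, hr⟩ := walk_avoiding hbic c x d hc.symm hd.1
    cases r with
    | nil => exact absurd rfl hd.2
    | cons h r => exact ⟨_, hr _ (by simp), h⟩
  obtain ⟨c, hc⟩ : ∃ c, c ≠ x := by
    by_contra! h
    have : Subsingleton V := ⟨fun a b => by rw [h a, h b]⟩
    have := Finite.card_le_one_iff_subsingleton.2 this
    omega
  obtain ⟨y, -, hy⟩ := key c hc
  obtain ⟨y', hne, hy'⟩ := key y hy.ne.symm
  exact ⟨y, y', hne.symm, hy, hy'⟩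

theorem cycle_edges_subset {a b : V} {w : G.Walk a a} {w' : G.Walk b b} (hw : w.IsCycle)
    (hw' : w'.IsCycle) (hsub : ∀ e ∈ w.edges, e ∈ w'.edges) : ∀ z ∈ w'.support, z ∈ w.support := by
  classical
  have hin : ∀ y ∈ w.support, y ∈ w'.support ∧ ∀ z, s(y, z) ∈ w'.edges → z ∈ w.support := by
    intro y hy
    have h2 := hw.ncard_neighborSet_toSubgraph_eq_two hy
    have hne : (w.toSubgraph.neighborSet y).Nonempty :=
      Set.nonempty_of_ncard_ne_zero (by omega)
    have hsub' : w.toSubgraph.neighborSet y ⊆ w'.toSubgraph.neighborSet y := by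
      intro z hz
      rw [Subgraph.mem_neighborSet, Walk.adj_toSubgraph_iff_mem_edges] at hz ⊢
      exact hsub _ hz
    obtain ⟨z, hz⟩ := hne
    have hz' := hsub' hz
    rw [Subgraph.mem_neighborSet, Walk.adj_toSubgraph_iff_mem_edges] at hz'
    have hy' := w'.fst_mem_support_of_mem_edges hz'
    have h2' := hw'.ncard_neighborSet_toSubgraph_eq_two hy'
    have heq := Set.eq_of_subset_of_ncard_le hsub' (by omega) w'.finite_neighborSet_toSubgraph
    refine ⟨hy', fun z hz => ?_⟩
    have : z ∈ w'.toSubgraph.neighborSet y := by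
      rw [Subgraph.mem_neighborSet, Walk.adj_toSubgraph_iff_mem_edges]
      exact hz
    rw [← heq, Subgraph.mem_neighborSet, Walk.adj_toSubgraph_iff_mem_edges] at this
    exact w.snd_mem_support_of_mem_edges this
  have prop : ∀ {c d : V} (r : G.Walk c d), (∀ e ∈ r.edges, e ∈ w'.edges) → c ∈ w.support →
      ∀ z ∈ r.support, z ∈ w.support := by
    intro c d r
    induction r with
    | nil =>
      intro _ hc z hz
      simp at hz
      exact hz ▸ hc
    | cons h r ih =>
      intro he hc z hz
      rw [Walk.support_cons, List.mem_cons] at hz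
      rcases hz with rfl | hz
      · exact hc
      · exact ih (fun e h => he e (by simp [h])) ((hin _ hc).2 _ (he _ (by simp))) z hz
  have ha := (hin a w.start_mem_support).1
  intro z hz
  exact prop (w'.rotate a ha) (fun e he => (w'.rotate_edges a ha).perm.mem_iff.1 he)
    w.start_mem_support z (by simpa using hz)
end graph

section emb
variable {V : Type u} {G : SimpleGraph V} (E : PlaneEmbedding G)
open SimpleGraph

theorem arc_compact {u v : V} (h : G.Adj u v) : IsCompact (E.arc h) := by
  obtain ⟨f, hf, -, -, -, he⟩ := E.arc_curve h
  rw [← he]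
  exact isCompact_Icc.image_of_continuousOn hf

theorem left_mem_arc {u v : V} (h : G.Adj u v) : E.pos u ∈ E.arc h := by
  obtain ⟨f, hf, -, h0, h1, he⟩ := E.arc_curve h
  rw [← he]
  exact ⟨0, by simp, h0⟩

theorem right_mem_arc {u v : V} (h : G.Adj u v) : E.pos v ∈ E.arc h := by
  obtain ⟨f, hf, -, h0, h1, he⟩ := E.arc_curve h
  rw [← he]
  exact ⟨1, by simp, h1⟩

theorem arc_eq {u v a b : V} (h : G.Adj u v) (h' : G.Adj a b) (e : s(a, b) = s(u, v)) :
    E.arc h' = E.arc h := by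
  rcases Sym2.eq_iff.1 e with ⟨rfl, rfl⟩ | ⟨rfl, rfl⟩
  · rfl
  · exact E.arc_symm h

theorem arc_joined {u v : V} (h : G.Adj u v) : JoinedIn (E.arc h) (E.pos u) (E.pos v) := by
  have : IsPathConnected (E.arc h) := by
    obtain ⟨f, hf, -, -, -, he⟩ := E.arc_curve h
    rw [← he]
    exact ((convex_Icc (0:ℝ) 1).isPathConnected ⟨0, by simp⟩).image' hf
  exact this.joinedIn _ (left_mem_arc E h) _ (right_mem_arc E h)

def pdraw : ∀ {u v : V}, G.Walk u v → Set (ℝ × ℝ)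
  | u, _, Walk.nil => {E.pos u}
  | _, _, Walk.cons h p => E.arc h ∪ pdraw p

theorem pdraw_compact {u v : V} (p : G.Walk u v) : IsCompact (pdraw E p) := by
  induction p with
  | nil => exact isCompact_singleton
  | cons h p ih => exact (arc_compact E h).union ih

theorem pdraw_joined {u v : V} (p : G.Walk u v) : JoinedIn (pdraw E p) (E.pos u) (E.pos v) := by
  induction p with
  | nil => exact JoinedIn.refl rfl
  | cons h p ih =>
    exact ((arc_joined E h).mono subset_union_left).trans (ih.mono subset_union_right)

theorem mem_pdraw {u v : V} (p : G.Walk u v) (x : ℝ × ℝ) :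
    x ∈ pdraw E p ↔ x = E.pos v ∨ ∃ (a b : V) (h : G.Adj a b), s(a, b) ∈ p.edges ∧ x ∈ E.arc h := by
  induction p with
  | nil => simp [pdraw]
  | cons h p ih =>
    rw [pdraw, mem_union, ih]
    constructor
    · rintro (h1 | h1 | ⟨a, b, h', he, hx⟩)
      · exact .inr ⟨_, _, h, by simp, h1⟩
      · exact .inl h1
      · exact .inr ⟨a, b, h', by simp [he], hx⟩
    · rintro (h1 | ⟨a, b, h', he, hx⟩)
      · exact .inr (.inl h1)
      · rw [Walk.edges_cons, List.mem_cons] at he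
        rcases he with he | he
        · left
          rwa [arc_eq E h h' he] at hx
        · exact .inr (.inr ⟨a, b, h', he, hx⟩)

theorem arc_inter_pdraw {u v : V} (h : G.Adj u v) {a b : V} (p : G.Walk a b)
    (he : s(u, v) ∉ p.edges) {x : ℝ × ℝ} (hx : x ∈ E.arc h) (hxp : x ∈ pdraw E p) :
    ∃ w ∈ p.support, x = E.pos w ∧ (w = u ∨ w = v) := by
  induction p with
  | nil =>
    rename_i a
    have : x = E.pos a := hxp
    subst this
    exact ⟨a, by simp, rfl, E.pos_arc h a hx⟩
  | cons h' p ih =>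
    rename_i a b c
    rw [Walk.edges_cons, List.mem_cons] at he
    push Not at he
    rcases hxp with h1 | h1
    · obtain ⟨h2, h3⟩ := E.arc_inter h h' he.1 ⟨hx, h1⟩
      simp only [mem_insert_iff, mem_singleton_iff] at h3
      rcases h3 with rfl | rfl
      · exact ⟨a, by simp, rfl, E.pos_arc h _ hx⟩
      · exact ⟨b, by simp, rfl, E.pos_arc h _ hx⟩
    · obtain ⟨w, hw, h3⟩ := ih he.2 h1
      exact ⟨w, by simp [hw], h3⟩

theorem logProp_singleton {X : Type*} [TopologicalSpace X] (c : X) : LogProp ({c} : Set X) := by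
  intro f hf h0
  refine ⟨fun _ => Complex.log (f c), continuousOn_const, ?_⟩
  intro x hx
  have : x = c := hx
  subst this
  exact Complex.exp_log (h0 x rfl)

theorem logProp_arcE {u v : V} (h : G.Adj u v) : LogProp (E.arc h) := by
  obtain ⟨f, hf, hi, -, -, he⟩ := E.arc_curve h
  rw [← he]
  exact logProp_arc f one_pos hf hi

theorem logProp_pdraw {u v : V} (p : G.Walk u v) (hp : p.IsPath) : LogProp (pdraw E p) := by
  induction p with
  | nil => exact logProp_singleton _
  | cons h p ih =>
    rename_i a b c
    rw [Walk.cons_isPath_iff] at hp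
    refine LogProp.union (c := E.pos b) (logProp_arcE E h) (ih hp.1) (arc_compact E h).isClosed
      (pdraw_compact E p).isClosed (right_mem_arc E h) (pdraw_joined E p).source_mem ?_
    intro x h1 h2
    obtain ⟨w, hw, rfl, rfl | rfl⟩ := arc_inter_pdraw E h p
      (fun he => hp.2 (p.fst_mem_support_of_mem_edges he)) h1 h2
    · exact absurd hw hp.2
    · rfl

theorem cyc_eq {v0 : V} {w : G.Walk v0 v0} {u v : V} (h : G.Adj u v) (p : G.Walk v u)
    (hp : ∀ e, e ∈ w.edges ↔ e = s(u, v) ∨ e ∈ p.edges) :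
    cycleDrawing E w = E.arc h ∪ pdraw E p := by
  ext x
  rw [mem_union, mem_pdraw]
  constructor
  · rintro ⟨a, b, h', he, hx⟩
    rw [hp] at he
    rcases he with he | he
    · left
      rwa [arc_eq E h h' he] at hx
    · exact .inr (.inr ⟨a, b, h', he, hx⟩)
  · rintro (hx | rfl | ⟨a, b, h', he, hx⟩)
    · exact ⟨u, v, h, by simp [hp], hx⟩
    · exact ⟨u, v, h, by simp [hp], left_mem_arc E h⟩
    · exact ⟨a, b, h', by simp [hp, he], hx⟩

theorem exists_edge {v0 : V} {w : G.Walk v0 v0} (hw : w.IsCycle) {y : V} (hy : y ∈ w.support) :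
    ∃ z, s(y, z) ∈ w.edges := by
  have h2 := hw.ncard_neighborSet_toSubgraph_eq_two hy
  obtain ⟨z, hz⟩ : (w.toSubgraph.neighborSet y).Nonempty :=
    Set.nonempty_of_ncard_ne_zero (by omega)
  rw [Subgraph.mem_neighborSet, Walk.adj_toSubgraph_iff_mem_edges] at hz
  exact ⟨z, hz⟩

theorem pos_mem_cyc {v0 : V} {w : G.Walk v0 v0} (hw : w.IsCycle) (y : V) :
    E.pos y ∈ cycleDrawing E w ↔ y ∈ w.support := by
  constructor
  · rintro ⟨a, b, h, he, hx⟩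
    rcases E.pos_arc h y hx with rfl | rfl
    · exact w.fst_mem_support_of_mem_edges he
    · exact w.snd_mem_support_of_mem_edges he
  · intro hy
    obtain ⟨z, hz⟩ := exists_edge hw hy
    exact ⟨y, z, w.adj_of_mem_edges hz, hz, left_mem_arc E _⟩

theorem cyc_compact {v0 : V} {w : G.Walk v0 v0} (hw : w.IsCycle) :
    IsCompact (cycleDrawing E w) := by
  obtain ⟨z, hz⟩ := exists_edge hw w.start_mem_support
  obtain ⟨p, -, -, hp⟩ := cycle_split hw hz
  rw [cyc_eq E (w.adj_of_mem_edges hz) p hp]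
  exact (arc_compact E _).union (pdraw_compact E p)

theorem cyc_sep {v0 : V} {w : G.Walk v0 v0} (hw : w.IsCycle) :
    ¬ IsPreconnected (cycleDrawing E w)ᶜ := by
  obtain ⟨z, hz⟩ := exists_edge hw w.start_mem_support
  obtain ⟨p, -, hn, hp⟩ := cycle_split hw hz
  have h := w.adj_of_mem_edges hz
  rw [cyc_eq E h p hp]
  refine jordan_sep (a := E.pos v0) (b := E.pos z) (E.pos_inj.ne h.ne) (arc_compact E _).isClosed
    (pdraw_compact E p).isClosed (arc_joined E h) (pdraw_joined E p).symm ?_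
  rintro x ⟨h1, h2⟩
  obtain ⟨y, -, rfl, rfl | rfl⟩ := arc_inter_pdraw E h p hn h1 h2 <;> simp

theorem cyc_frontier {v0 : V} {w : G.Walk v0 v0} (hw : w.IsCycle) {q : ℝ × ℝ}
    (hq : q ∉ cycleDrawing E w) :
    frontier (connectedComponentIn (cycleDrawing E w)ᶜ q) = cycleDrawing E w := by
  have hCc : IsClosed (cycleDrawing E w) := (cyc_compact E hw).isClosed
  have hsub := frontier_comp_subset hCc q
  refine hsub.antisymm ?_
  by_contra hcon
  rw [not_subset] at hcon
  obtain ⟨x, ⟨u, v, h, he, hx⟩, hxF⟩ := hcon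
  obtain ⟨p, hpath, hn, hp⟩ := cycle_split hw he
  have hC := cyc_eq E h p hp
  have hqU : q ∈ connectedComponentIn (cycleDrawing E w)ᶜ q := mem_connectedComponentIn hq
  have hUC : connectedComponentIn (cycleDrawing E w)ᶜ q ⊆ (cycleDrawing E w)ᶜ :=
    connectedComponentIn_subset _ _
  have hUo : IsOpen (connectedComponentIn (cycleDrawing E w)ᶜ q) :=
    hCc.isOpen_compl.connectedComponentIn
  have hUp : IsPreconnected (connectedComponentIn (cycleDrawing E w)ᶜ q) :=
    isPreconnected_connectedComponentIn
  generalize connectedComponentIn (cycleDrawing E w)ᶜ q = U at *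
  obtain ⟨f, hf, hi, h0, h1, hfa⟩ := E.arc_curve h
  rw [← hfa] at hx
  obtain ⟨t0, ht0, rfl⟩ := hx
  have hopen : (frontier U)ᶜ ∈ nhds (f t0) := isClosed_frontier.isOpen_compl.mem_nhds hxF
  have hev := hf t0 ht0 hopen
  rw [Filter.mem_map, Metric.mem_nhdsWithin_iff] at hev
  obtain ⟨ε, hε, hball⟩ := hev
  obtain ⟨s, s', hs0, hss, hs1, hmid⟩ : ∃ s s' : ℝ, 0 < s ∧ s < s' ∧ s' < 1 ∧
      ∀ t, s ≤ t → t ≤ s' → f t ∉ frontier U := by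
    have hab : max 0 (t0 - ε) < min 1 (t0 + ε) := by
      rw [max_lt_iff, lt_min_iff, lt_min_iff]
      obtain ⟨h1, h2⟩ := ht0
      refine ⟨⟨by linarith, by linarith⟩, by linarith, by linarith⟩
    have ha0 := le_max_left 0 (t0 - ε)
    have ha1 := le_max_right 0 (t0 - ε)
    have hb0 := min_le_left 1 (t0 + ε)
    have hb1 := min_le_right 1 (t0 + ε)
    generalize max 0 (t0 - ε) = a at *
    generalize min 1 (t0 + ε) = b at *
    refine ⟨(2 * a + b) / 3, (a + 2 * b) / 3, by linarith, by linarith, by linarith, ?_⟩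
    intro t h1 h2
    refine hball ⟨?_, ?_, ?_⟩
    · rw [Metric.mem_ball, Real.dist_eq, abs_lt]
      constructor <;> linarith
    · linarith
    · linarith
  have sub1 : Icc 0 s ⊆ Icc (0:ℝ) 1 := Icc_subset_Icc le_rfl (by linarith)
  have sub2 : Icc s' 1 ⊆ Icc (0:ℝ) 1 := Icc_subset_Icc (by linarith) le_rfl
  have inarc : ∀ t ∈ Icc (0:ℝ) 1, f t ∈ E.arc h := fun t ht => hfa ▸ mem_image_of_mem f ht
  have hpd : ∀ t ∈ Icc (0:ℝ) 1, f t ∈ pdraw E p → t = 0 ∨ t = 1 := by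
    intro t ht htp
    obtain ⟨y, -, hy, rfl | rfl⟩ := arc_inter_pdraw E h p hn (inarc t ht) htp
    · left; exact hi ht (by simp) (hy.trans h0.symm)
    · right; exact hi ht (by simp) (hy.trans h1.symm)
  have c1 : IsCompact (f '' Icc 0 s) := isCompact_Icc.image_of_continuousOn (hf.mono sub1)
  have c2 : IsCompact (f '' Icc s' 1) := isCompact_Icc.image_of_continuousOn (hf.mono sub2)
  have c12 : IsCompact (pdraw E p ∪ f '' Icc 0 s) := (pdraw_compact E p).union c1
  have hL1 : LogProp (pdraw E p ∪ f '' Icc 0 s) := by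
    refine LogProp.union (c := E.pos u) (logProp_pdraw E p hpath)
      (logProp_arc f hs0 (hf.mono sub1) (hi.mono sub1)) (pdraw_compact E p).isClosed c1.isClosed
      (pdraw_joined E p).target_mem ⟨0, by simp [hs0.le], h0⟩ ?_
    rintro x hx ⟨t, ht, rfl⟩
    rcases hpd t (sub1 ht) hx with rfl | rfl
    · exact h0
    · have := ht.2; linarith
  have hL : LogProp (pdraw E p ∪ f '' Icc 0 s ∪ f '' Icc s' 1) := by
    refine LogProp.union (c := E.pos v) hL1
      (logProp_arc f hs1 (hf.mono sub2) (hi.mono sub2)) c12.isClosed c2.isClosed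
      (.inl (pdraw_joined E p).source_mem) ⟨1, by simp [hs1.le], h1⟩ ?_
    rintro x hx ⟨t, ht, rfl⟩
    rcases hx with hx | ⟨t', ht', heq⟩
    · rcases hpd t (sub2 ht) hx with rfl | rfl
      · have := ht.1; linarith
      · exact h1
    · have := hi (sub1 ht') (sub2 ht) heq
      have := ht.1
      have := ht'.2
      linarith
  have hK := compl_preconn (c12.union c2) hL
  have hKC : pdraw E p ∪ f '' Icc 0 s ∪ f '' Icc s' 1 ⊆ cycleDrawing E w := by
    rw [hC]
    rintro x ((hx | ⟨t, ht, rfl⟩) | ⟨t, ht, rfl⟩)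
    · exact .inr hx
    · exact .inl (inarc t (sub1 ht))
    · exact .inl (inarc t (sub2 ht))
  have hFK : frontier U ⊆ pdraw E p ∪ f '' Icc 0 s ∪ f '' Icc s' 1 := by
    intro x hx
    have := hsub hx
    rw [hC] at this
    rcases this with hxa | hxp
    · rw [← hfa] at hxa
      obtain ⟨t, ht, rfl⟩ := hxa
      by_cases h1 : t ≤ s
      · exact .inl (.inr ⟨t, ⟨ht.1, h1⟩, rfl⟩)
      · by_cases h2 : s' ≤ t
        · exact .inr ⟨t, ⟨h2, ht.2⟩, rfl⟩
        · exact absurd hx (hmid t (by linarith) (by linarith))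
    · exact .inl (.inl hxp)
  have hUK := eq_comp hUo hUp hqU (hUC.trans (compl_subset_compl.2 hKC)) hFK
  rw [hK.connectedComponentIn (fun h => hUC hqU (hKC h))] at hUK
  have hm : (s + s') / 2 ∈ Icc (0:ℝ) 1 := ⟨by linarith, by linarith⟩
  have : f ((s + s') / 2) ∈ U := by
    rw [hUK]
    rintro ((hx | ⟨t, ht, he⟩) | ⟨t, ht, he⟩)
    · rcases hpd _ hm hx with h | h <;> linarith
    · have := hi (sub1 ht) hm he
      have := ht.2
      linarith
    · have := hi (sub2 ht) hm he
      have := ht.1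
      linarith
  refine hUC this ?_
  rw [hC]
  exact .inl (inarc _ hm)

theorem arc_inter_cyc {v0 : V} {w : G.Walk v0 v0} {u v : V} (h : G.Adj u v)
    (he : s(u, v) ∉ w.edges) {x : ℝ × ℝ} (hx : x ∈ E.arc h) (hxC : x ∈ cycleDrawing E w) :
    x = E.pos u ∨ x = E.pos v := by
  obtain ⟨a, b, h', he', hx'⟩ := hxC
  have := (E.arc_inter h h' (fun h => he (h ▸ he')) ⟨hx, hx'⟩).1
  simpa using this

theorem arc_sub {v0 : V} {w : G.Walk v0 v0} (hw : w.IsCycle) {q : ℝ × ℝ} {u v : V}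
    (h : G.Adj u v) (hu : E.pos u ∈ connectedComponentIn (cycleDrawing E w)ᶜ q) :
    E.arc h ⊆ connectedComponentIn (cycleDrawing E w)ᶜ q ∪ cycleDrawing E w := by
  have hCc : IsClosed (cycleDrawing E w) := (cyc_compact E hw).isClosed
  have hcl := closure_comp_subset hCc q
  have hqu := connectedComponentIn_eq hu
  rw [hqu] at hcl hu ⊢
  have huC := connectedComponentIn_subset _ _ hu
  have he : s(u, v) ∉ w.edges := fun he =>
    huC ((pos_mem_cyc E hw u).2 (w.fst_mem_support_of_mem_edges he))
  obtain ⟨f, hf, hi, h0, h1, hfa⟩ := E.arc_curve h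
  have hpre : f '' Ico 0 1 ⊆ connectedComponentIn (cycleDrawing E w)ᶜ (E.pos u) := by
    refine IsPreconnected.subset_connectedComponentIn
      (isPreconnected_Ico.image f (hf.mono Ico_subset_Icc_self)) ⟨0, by simp, h0⟩ ?_
    rintro x ⟨t, ht, rfl⟩ hxC
    rcases arc_inter_cyc E h he (hfa ▸ mem_image_of_mem f (Ico_subset_Icc_self ht)) hxC with h | h
    · exact huC (h ▸ hxC)
    · have := hi (Ico_subset_Icc_self ht) (by simp) (h.trans h1.symm)
      have := ht.2
      linarith
  refine Subset.trans ?_ hcl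
  rw [← hfa, ← closure_Ico (zero_ne_one' ℝ)]
  rw [← closure_Ico (zero_ne_one' ℝ)] at hf
  exact hf.image_closure.trans (closure_mono hpre)

theorem arc_ends {v0 : V} {w : G.Walk v0 v0} (hw : w.IsCycle) {q : ℝ × ℝ} {u v : V}
    (h : G.Adj u v) (he : s(u, v) ∉ w.edges) {x : ℝ × ℝ} (hx : x ∈ E.arc h)
    (hxD : x ∈ connectedComponentIn (cycleDrawing E w)ᶜ q) (hxu : x ≠ E.pos u)
    (hxv : x ≠ E.pos v) :
    E.arc h ⊆ connectedComponentIn (cycleDrawing E w)ᶜ q ∪ cycleDrawing E w := by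
  have hCc : IsClosed (cycleDrawing E w) := (cyc_compact E hw).isClosed
  have hcl := closure_comp_subset hCc q
  have hqu := connectedComponentIn_eq hxD
  rw [hqu] at hcl hxD ⊢
  obtain ⟨f, hf, hi, h0, h1, hfa⟩ := E.arc_curve h
  have hx' := hx
  rw [← hfa] at hx'
  obtain ⟨t0, ht0, rfl⟩ := hx'
  have ht0' : t0 ∈ Ioo (0:ℝ) 1 := by
    refine ⟨lt_of_le_of_ne ht0.1 ?_, lt_of_le_of_ne ht0.2 ?_⟩
    · rintro rfl; exact hxu h0
    · rintro rfl; exact hxv h1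
  have hpre : f '' Ioo 0 1 ⊆ connectedComponentIn (cycleDrawing E w)ᶜ (f t0) := by
    refine IsPreconnected.subset_connectedComponentIn
      (isPreconnected_Ioo.image f (hf.mono Ioo_subset_Icc_self)) ⟨t0, ht0', rfl⟩ ?_
    rintro x ⟨t, ht, rfl⟩ hxC
    rcases arc_inter_cyc E h he (hfa ▸ mem_image_of_mem f (Ioo_subset_Icc_self ht)) hxC with h | h
    · have := hi (Ioo_subset_Icc_self ht) (by simp) (h.trans h0.symm)
      have := ht.1
      linarith
    · have := hi (Ioo_subset_Icc_self ht) (by simp) (h.trans h1.symm)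
      have := ht.2
      linarith
  refine Subset.trans ?_ hcl
  rw [← hfa, ← closure_Ioo (zero_ne_one' ℝ)]
  rw [← closure_Ioo (zero_ne_one' ℝ)] at hf
  exact hf.image_closure.trans (closure_mono hpre)

/-- an interior point of an arc not in the cycle -/
theorem exists_off {v0 : V} {w : G.Walk v0 v0} {u v : V} (h : G.Adj u v)
    (he : s(u, v) ∉ w.edges) : ∃ y ∈ E.arc h, y ∉ cycleDrawing E w := by
  obtain ⟨f, hf, hi, h0, h1, hfa⟩ := E.arc_curve h
  have hm : (1 / 2 : ℝ) ∈ Icc (0:ℝ) 1 := by constructor <;> norm_num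
  have ha : f (1 / 2) ∈ E.arc h := hfa ▸ mem_image_of_mem f hm
  refine ⟨_, ha, fun hC => ?_⟩
  rcases arc_inter_cyc E h he ha hC with h | h
  · have := hi hm (by simp) (h.trans h0.symm)
    norm_num at this
  · have := hi hm (by simp) (h.trans h1.symm)
    norm_num at this
end emb

section main
variable {V : Type u} {G : SimpleGraph V} (E : PlaneEmbedding G)
open SimpleGraph

def Chordless {v0 : V} (w : G.Walk v0 v0) : Prop :=
  ∀ u v : V, u ∈ w.support → v ∈ w.support → G.Adj u v → s(u, v) ∈ w.edges

def VD {v0 : V} (w : G.Walk v0 v0) (q : ℝ × ℝ) : Set V :=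
  {v | E.pos v ∈ connectedComponentIn (cycleDrawing E w)ᶜ q}

theorem main_step (hbic : G.IsBiconnected) {v0 : V} {w : G.Walk v0 v0} (hw : w.IsCycle)
    (hch : Chordless w) {q : ℝ × ℝ} {x : V} (hx : x ∈ VD E w q) :
    ∃ (w' : G.Walk x x) (q' : ℝ × ℝ), w'.IsCycle ∧ Chordless w' ∧
      q' ∉ cycleDrawing E w' ∧ VD E w' q' ⊂ VD E w q := by
  classical
  obtain ⟨hcard, -, hb⟩ := hbic
  have memC := pos_mem_cyc E hw
  have notC : ∀ a ∈ VD E w q, a ∉ w.support := fun a ha h =>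
    connectedComponentIn_subset _ _ ha ((memC a).2 h)
  have hadj : ∀ a ∈ VD E w q, ∀ b, G.Adj a b → b ∈ VD E w q ∨ b ∈ w.support := by
    intro a ha b hab
    rcases arc_sub E hw hab ha (right_mem_arc E hab) with h | h
    · exact .inl h
    · exact .inr ((memC b).1 h)
  obtain ⟨y, y', hyy, hxy, hxy'⟩ := two_nbrs hcard hb x
  obtain ⟨r, hr⟩ := walk_avoiding hb x y y' hxy.ne.symm hxy'.ne.symm
  have hxw := notC x hx
  have hpush := push_walk (S := {v | v ∈ VD E w q ∨ v ∈ w.support}) (T := {v | v ∈ w.support})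
    (x := x) (c0 := v0) ⟨.inr w.start_mem_support, fun h => hxw (h ▸ w.start_mem_support)⟩
    (by
      rintro a (ha | ha) b hb' hab
      · exact absurd (hadj a ha b hab) hb'
      · exact ha)
    (by
      intro a ha
      have ha' : a ∈ w.support := ha
      refine ⟨(w.takeUntil a ha').reverse, ?_⟩
      intro z hz
      rw [Walk.support_reverse, List.mem_reverse] at hz
      have := w.support_takeUntil_subset_support ha' hz
      exact ⟨.inr this, fun h => hxw (h ▸ this)⟩)
    r hr (hadj x hx y' hxy')
  obtain ⟨r', hr'⟩ := hpush.1 (hadj x hx y hxy)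
  obtain ⟨w', hw', hS', hch'⟩ := exists_chordless _ x
    (cycle_of_walk (.inl hx) hxy hxy' hyy r' hr')
  have hC'sub : cycleDrawing E w' ⊆
      connectedComponentIn (cycleDrawing E w)ᶜ q ∪ cycleDrawing E w := by
    rintro p ⟨a, b, h, he, hp⟩
    have ha := hS' a (w'.fst_mem_support_of_mem_edges he)
    have hb := hS' b (w'.snd_mem_support_of_mem_edges he)
    rcases ha with ha | ha
    · exact arc_sub E hw h ha hp
    · rcases hb with hb | hb
      · exact arc_sub E hw h.symm hb ((E.arc_symm h).symm ▸ hp)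
      · exact .inr ⟨a, b, h, hch a b ha hb h, hp⟩
  obtain ⟨p0, hp0C, hp0C'⟩ : ∃ y ∈ cycleDrawing E w, y ∉ cycleDrawing E w' := by
    have : ∃ e ∈ w.edges, e ∉ w'.edges := by
      by_contra! hcon
      exact hxw (cycle_edges_subset hw hw' hcon x w'.start_mem_support)
    obtain ⟨e, he, he'⟩ := this
    induction e using Sym2.ind with
    | _ a b =>
      obtain ⟨y, hy, hy'⟩ := exists_off E (w := w') (w.adj_of_mem_edges he) he'
      exact ⟨y, ⟨a, b, _, he, hy⟩, hy'⟩
  obtain ⟨q', hq', hyq'⟩ : ∃ q', q' ∉ cycleDrawing E w' ∧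
      p0 ∉ connectedComponentIn (cycleDrawing E w')ᶜ q' := by
    by_contra! hcon
    apply cyc_sep E hw'
    have : (cycleDrawing E w')ᶜ = connectedComponentIn (cycleDrawing E w')ᶜ p0 := by
      refine Subset.antisymm ?_ (connectedComponentIn_subset _ _)
      intro z hz
      rw [← connectedComponentIn_eq (hcon z hz)]
      exact mem_connectedComponentIn hz
    rw [this]
    exact isPreconnected_connectedComponentIn
  have key : ∀ z, z ∉ cycleDrawing E w → z ∉ connectedComponentIn (cycleDrawing E w)ᶜ q →
      ∀ p, p = z ∨ p ∈ cycleDrawing E w → p ∉ cycleDrawing E w' →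
        p ∉ connectedComponentIn (cycleDrawing E w')ᶜ q' := by
    intro z hzC hzD p hp hpC' hpD'
    have hfr := cyc_frontier E hw hzC
    have hzY : z ∈ connectedComponentIn (cycleDrawing E w)ᶜ z := mem_connectedComponentIn hzC
    have hpre : IsPreconnected (connectedComponentIn (cycleDrawing E w)ᶜ z ∪
        (cycleDrawing E w \ cycleDrawing E w')) := by
      refine isPreconnected_connectedComponentIn.subset_closure subset_union_left ?_
      refine union_subset subset_closure ?_
      intro a ha
      have := ha.1
      rw [← hfr] at this
      exact frontier_subset_closure this
    have hdis : connectedComponentIn (cycleDrawing E w)ᶜ z ∪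
        (cycleDrawing E w \ cycleDrawing E w') ⊆ (cycleDrawing E w')ᶜ := by
      rintro a (ha | ha)
      · intro haC'
        rcases hC'sub haC' with h | h
        · apply hzD
          rw [connectedComponentIn_eq h, ← connectedComponentIn_eq ha]
          exact hzY
        · exact connectedComponentIn_subset _ _ ha h
      · exact ha.2
    have hpm : p ∈ connectedComponentIn (cycleDrawing E w)ᶜ z ∪
        (cycleDrawing E w \ cycleDrawing E w') := by
      rcases hp with rfl | hp
      · exact .inl hzY
      · exact .inr ⟨hp, hpC'⟩
    have := hpre.subset_connectedComponentIn hpm hdis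
    apply hyq'
    rw [connectedComponentIn_eq hpD']
    exact this (.inr ⟨hp0C, hp0C'⟩)
  obtain ⟨z0, hz0C, hz0D⟩ : ∃ z0, z0 ∉ cycleDrawing E w ∧
      z0 ∉ connectedComponentIn (cycleDrawing E w)ᶜ q := by
    by_contra! hcon
    apply cyc_sep E hw
    have : (cycleDrawing E w)ᶜ = connectedComponentIn (cycleDrawing E w)ᶜ q :=
      Subset.antisymm hcon (connectedComponentIn_subset _ _)
    rw [this]
    exact isPreconnected_connectedComponentIn
  have hDD : connectedComponentIn (cycleDrawing E w')ᶜ q' ⊆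
      connectedComponentIn (cycleDrawing E w)ᶜ q := by
    intro p hp
    have hpC' := connectedComponentIn_subset _ _ hp
    by_contra hpD
    by_cases hpC : p ∈ cycleDrawing E w
    · exact key z0 hz0C hz0D p (.inr hpC) hpC' hp
    · exact key p hpC hpD p (.inl rfl) hpC' hp
  refine ⟨w', q', hw', hch', hq', ?_⟩
  have hVV : VD E w' q' ⊆ VD E w q := fun v hv => hDD hv
  rw [ssubset_iff_of_subset hVV]
  refine ⟨x, hx, fun h => ?_⟩
  exact connectedComponentIn_subset _ _ h ((pos_mem_cyc E hw' x).2 w'.start_mem_support)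

theorem main_min (hbic : G.IsBiconnected) : ∃ (v0 : V) (w : G.Walk v0 v0) (q : ℝ × ℝ),
    w.IsCycle ∧ Chordless w ∧ q ∉ cycleDrawing E w ∧ VD E w q = ∅ := by
  have hfin : Finite V := Nat.finite_of_card_ne_zero (by have := hbic.1; omega)
  have ind : ∀ n, ∀ (v0 : V) (w : G.Walk v0 v0) (q : ℝ × ℝ), w.IsCycle → Chordless w →
      q ∉ cycleDrawing E w → (VD E w q).ncard = n → 
      ∃ (v0 : V) (w : G.Walk v0 v0) (q : ℝ × ℝ),
        w.IsCycle ∧ Chordless w ∧ q ∉ cycleDrawing E w ∧ VD E w q = ∅ := by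
    intro n
    induction n using Nat.strong_induction_on with
    | _ n ih =>
      intro v0 w q hw hch hq hn
      rcases (VD E w q).eq_empty_or_nonempty with h | ⟨x, hx⟩
      · exact ⟨v0, w, q, hw, hch, hq, h⟩
      · obtain ⟨w', q', hw', hch', hq', hlt⟩ := main_step E hbic hw hch hx
        exact ih _ (hn ▸ Set.ncard_lt_ncard hlt (Set.toFinite _)) x w' q' hw' hch' hq' rfl
  obtain ⟨hcard, hconn, hb⟩ := hbic
  obtain ⟨x⟩ := hconn.nonempty
  obtain ⟨y, y', hyy, hxy, hxy'⟩ := two_nbrs hcard hb x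
  obtain ⟨r, hr⟩ := walk_avoiding hb x y y' hxy.ne.symm hxy'.ne.symm
  obtain ⟨w, hw, -, hch⟩ := exists_chordless univ x
    (cycle_of_walk (mem_univ x) hxy hxy' hyy r (fun z hz => ⟨mem_univ z, hr z hz⟩))
  obtain ⟨q, hq⟩ : ∃ q, q ∉ cycleDrawing E w := by
    by_contra! hcon
    apply cyc_sep E hw
    rw [eq_univ_of_forall hcon, compl_univ]
    exact isPreconnected_empty
  exact ind _ x w q hw hch hq rfl

theorem cyc_sub_drawing {v0 : V} (w : G.Walk v0 v0) : cycleDrawing E w ⊆ E.drawing := by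
  rintro p ⟨a, b, h, -, hp⟩
  refine .inr ?_
  simp only [mem_iUnion]
  exact ⟨a, b, h, hp⟩

theorem exists_face (hbic : G.IsBiconnected) : ∃ (v0 : V) (w : G.Walk v0 v0) (D : Set (ℝ × ℝ)),
    w.IsCycle ∧ Chordless w ∧ E.IsFace D ∧ IsOpen D ∧ frontier D = cycleDrawing E w := by
  obtain ⟨v0, w, q, hw, hch, hq, hV⟩ := main_min E hbic
  have hCc : IsClosed (cycleDrawing E w) := (cyc_compact E hw).isClosed
  have hfr := cyc_frontier E hw hq
  have hno : ∀ v, E.pos v ∉ connectedComponentIn (cycleDrawing E w)ᶜ q := by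
    intro v hv
    have : v ∈ VD E w q := hv
    rw [hV] at this
    exact this
  have hUo : IsOpen (connectedComponentIn (cycleDrawing E w)ᶜ q) :=
    hCc.isOpen_compl.connectedComponentIn
  have hsub : connectedComponentIn (cycleDrawing E w)ᶜ q ⊆ E.drawingᶜ := by
    rintro x hx (⟨v, rfl⟩ | hxa)
    · exact hno v hx
    · simp only [mem_iUnion] at hxa
      obtain ⟨u, v, h, hxa⟩ := hxa
      have he : s(u, v) ∉ w.edges := fun he =>
        connectedComponentIn_subset _ _ hx ⟨u, v, h, he, hxa⟩
      have := arc_ends E hw h he hxa hx (fun h => hno u (h ▸ hx)) (fun h => hno v (h ▸ hx))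
      refine he (hch u v ?_ ?_ h)
      · exact (pos_mem_cyc E hw u).1 ((this (left_mem_arc E h)).resolve_left (hno u))
      · exact (pos_mem_cyc E hw v).1 ((this (right_mem_arc E h)).resolve_left (hno v))
  have hqm : q ∈ connectedComponentIn (cycleDrawing E w)ᶜ q := mem_connectedComponentIn hq
  refine ⟨v0, w, _, hw, hch, ⟨q, hsub hqm, ?_⟩, hUo, hfr⟩
  exact eq_comp hUo isPreconnected_connectedComponentIn hqm hsub
    (hfr.subset.trans (cyc_sub_drawing E w))
end main

theorem punctured_ball (c : ℂ) (ε : ℝ) : IsPreconnected (Metric.ball c ε \ {c}) := by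
  have h : IsPreconnected ((fun x : ℝ × ℝ => c + (x.1 : ℂ) * Complex.exp (x.2 * Complex.I)) ''
      (Ioo 0 ε ×ˢ univ)) := by
    refine IsPreconnected.image (isPreconnected_Ioo.prod isPreconnected_univ) _ ?_
    fun_prop
  convert h using 1
  ext z
  constructor
  · rintro ⟨hz, hne⟩
    have hne' : z - c ≠ 0 := sub_ne_zero.2 hne
    refine ⟨(‖z - c‖, Complex.arg (z - c)), ⟨⟨norm_pos_iff.2 hne', ?_⟩, mem_univ _⟩, ?_⟩
    · rwa [Metric.mem_ball, dist_eq_norm] at hz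
    · simp [Complex.norm_mul_exp_arg_mul_I]
  · rintro ⟨⟨r, θ⟩, ⟨⟨h0, h1⟩, -⟩, rfl⟩
    simp only at h0 h1
    constructor
    · simp [Metric.mem_ball, dist_eq_norm, Complex.norm_exp_ofReal_mul_I, abs_of_pos h0, h1]
    · simp [h0.ne', Complex.exp_ne_zero]

theorem preconn_diff {D : Set ℂ} (hD : IsOpen D) (hc : IsPreconnected D) {p : ℂ} (hp : p ∈ D) :
    IsPreconnected (D \ {p}) := by
  obtain ⟨ε, hε, hB⟩ := Metric.isOpen_iff.1 hD p hp
  have hP := punctured_ball p ε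
  have hBD : Metric.ball p ε \ {p} ⊆ D \ {p} := sdiff_subset_sdiff_left hB
  have key : ∀ u v : Set ℂ, IsOpen u → IsOpen v → D \ {p} ⊆ u ∪ v → D \ {p} ∩ (u ∩ v) = ∅ →
      Metric.ball p ε \ {p} ⊆ u → D \ {p} ⊆ u := by
    intro u v hu hv hsub hdis hPu
    have := isPreconnected_iff_subset_of_disjoint.1 hc (u ∪ Metric.ball p ε) (v \ {p})
      (hu.union Metric.isOpen_ball) (hv.sdiff isClosed_singleton)
      (by
        intro x hx
        by_cases hxp : x = p
        · subst hxp; exact .inl (.inr (Metric.mem_ball_self hε))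
        · rcases hsub ⟨hx, hxp⟩ with h | h
          · exact .inl (.inl h)
          · exact .inr ⟨h, hxp⟩)
      (by
        rw [eq_empty_iff_forall_notMem]
        rintro x ⟨hx, h1, h2, h3⟩
        have : x ∈ u := by
          rcases h1 with h1 | h1
          · exact h1
          · exact hPu ⟨h1, h3⟩
        exact (eq_empty_iff_forall_notMem.1 hdis) x ⟨⟨hx, h3⟩, this, h2⟩)
    rcases this with h | h
    · rintro x ⟨hx, hxp⟩
      rcases h hx with h | h
      · exact h
      · exact hPu ⟨h, hxp⟩
    · exact absurd rfl (h hp).2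
  rw [isPreconnected_iff_subset_of_disjoint]
  intro u v hu hv hsub hdis
  rcases isPreconnected_iff_subset_of_disjoint.1 hP u v hu hv (hBD.trans hsub)
    (subset_empty_iff.1 (hdis ▸ inter_subset_inter_left _ hBD)) with h | h
  · exact .inl (key u v hu hv hsub hdis h)
  · exact .inr (key v u hv hu (union_comm u v ▸ hsub) (inter_comm u v ▸ hdis) h)

/-- inversion data -/
theorem inversion {D : Set (ℝ × ℝ)} (hD : IsOpen D) (hc : IsPreconnected D) {p : ℝ × ℝ}
    (hp : p ∈ D) (hb : Bornology.IsBounded D) :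
    ∃ (φ : ℝ × ℝ → ℝ × ℝ) (F : Set (ℝ × ℝ)), Function.Injective φ ∧ ContinuousOn φ {p}ᶜ ∧
      F = φ '' (D \ {p}) ∧ IsOpen F ∧ IsPreconnected F ∧ F.Nonempty ∧ ¬ Bornology.IsBounded F ∧
      frontier F = φ '' frontier D := by
  set c := eRC p with hcdef
  let φ : ℝ × ℝ → ℝ × ℝ := fun x => eRC.symm ((eRC x - c)⁻¹)
  let ψ : ℝ × ℝ → ℝ × ℝ := fun z => eRC.symm (c + (eRC z)⁻¹)
  have hψφ : ∀ x, ψ (φ x) = x := fun x => by simp [φ, ψ]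
  have hφψ : ∀ x, φ (ψ x) = x := fun x => by simp [φ, ψ]
  have hinj : Function.Injective φ := Function.LeftInverse.injective hψφ
  have hφp : φ p = eRC.symm 0 := by simp [φ, c]
  have hψo : ψ (eRC.symm 0) = p := by simp [ψ, c]
  have hφc : ContinuousOn φ {p}ᶜ := by
    refine eRC.symm.continuous.comp_continuousOn (ContinuousOn.inv₀ ?_ ?_)
    · exact (eRC.continuous.sub continuous_const).continuousOn
    · intro x hx h
      exact hx (eRC.injective (sub_eq_zero.1 h))
  have hψc : ContinuousOn ψ {eRC.symm 0}ᶜ := by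
    refine eRC.symm.continuous.comp_continuousOn
      (continuousOn_const.add (ContinuousOn.inv₀ eRC.continuous.continuousOn ?_))
    intro x hx h
    exact hx (by rw [mem_singleton_iff, ← h]; simp)
  have hF : ∀ x, x ∈ φ '' (D \ {p}) ↔ ψ x ∈ D ∧ x ≠ eRC.symm 0 := by
    intro x
    constructor
    · rintro ⟨y, ⟨hy, hyp⟩, rfl⟩
      rw [hψφ]
      refine ⟨hy, fun h => hyp (hinj (h.trans hφp.symm))⟩
    · rintro ⟨h1, h2⟩
      refine ⟨ψ x, ⟨h1, fun h => h2 ?_⟩, hφψ x⟩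
      rw [← hφψ x, ← hφp]
      exact congrArg φ h
  have hopen : IsOpen (φ '' (D \ {p})) := by
    have := hψc.isOpen_inter_preimage isOpen_compl_singleton hD
    convert this using 1
    ext x
    rw [hF]
    simp [and_comm]
  have hpre : IsPreconnected (D \ {p}) := by
    have h1 : IsPreconnected (eRC '' D) := hc.image _ eRC.continuous.continuousOn
    have h2 := preconn_diff (eRC.isOpenMap _ hD) h1 (mem_image_of_mem _ hp)
    have h3 := h2.image eRC.symm eRC.symm.continuous.continuousOn
    convert h3 using 1
    rw [image_sdiff eRC.symm.injective, ← image_comp]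
    simp
  have hball : ∃ r > 0, ∀ z : ℂ, ‖z‖ < r → z ≠ 0 → z⁻¹ ∈ eRC '' (φ '' (D \ {p})) := by
    obtain ⟨r, hr, hB⟩ := Metric.isOpen_iff.1 (eRC.isOpenMap _ hD) c (mem_image_of_mem _ hp)
    refine ⟨r, hr, fun z hz hz0 => ?_⟩
    have : c + z ∈ Metric.ball c r := by simpa [Metric.mem_ball, dist_eq_norm] using hz
    obtain ⟨x, hx, hxz⟩ := hB this
    refine ⟨φ x, ⟨x, ⟨hx, ?_⟩, rfl⟩, ?_⟩
    · rintro rfl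
      apply hz0
      have : c = c + z := hxz
      simpa using this
    · simp [φ, hxz]
  obtain ⟨r, hr, hball⟩ := hball
  have himg : ∀ S : Set (ℝ × ℝ), Bornology.IsBounded S → Bornology.IsBounded (eRC '' S) :=
    fun S hS => (Complex.equivRealProdCLM.symm.lipschitz).isBounded_image hS
  have hnb : ¬ Bornology.IsBounded (φ '' (D \ {p})) := by
    intro h
    obtain ⟨M, hM, hMb⟩ := (himg _ h).exists_pos_norm_le
    have ht : 0 < min (r / 2) (M + 1)⁻¹ := lt_min (by positivity) (by positivity)
    have h1 := min_le_left (r / 2) (M + 1)⁻¹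
    have h2 := min_le_right (r / 2) (M + 1)⁻¹
    generalize min (r / 2) (M + 1)⁻¹ = t at *
    have h3 := hMb _ (hball (t : ℂ) (by rw [Complex.norm_real, Real.norm_of_nonneg ht.le]; linarith)
      (by exact_mod_cast ht.ne'))
    rw [norm_inv, Complex.norm_real, Real.norm_of_nonneg ht.le] at h3
    have h4 : M + 1 ≤ t⁻¹ := by
      rw [← inv_inv (M + 1)]
      exact inv_anti₀ ht h2
    linarith
  have hne : (φ '' (D \ {p})).Nonempty := by
    by_contra h
    rw [not_nonempty_iff_eq_empty] at h
    exact hnb (h ▸ Bornology.isBounded_empty)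
  have ho : eRC.symm 0 ∉ closure (φ '' (D \ {p})) := by
    obtain ⟨R, hR, hRb⟩ := (himg _ hb).exists_pos_norm_le
    have hcR : ‖c‖ ≤ R := hRb c (mem_image_of_mem _ hp)
    have hcl : IsClosed {z : ℝ × ℝ | (2 * R)⁻¹ ≤ ‖eRC z‖} :=
      isClosed_le continuous_const eRC.continuous.norm
    have hsub : φ '' (D \ {p}) ⊆ {z : ℝ × ℝ | (2 * R)⁻¹ ≤ ‖eRC z‖} := by
      rintro _ ⟨x, ⟨hx, hxp⟩, rfl⟩
      have h1 : ‖eRC x‖ ≤ R := hRb _ (mem_image_of_mem _ hx)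
      have h2 : 0 < ‖eRC x - c‖ := norm_pos_iff.2 (sub_ne_zero.2 fun h => hxp (eRC.injective h))
      have h3 : ‖eRC x - c‖ ≤ 2 * R := (norm_sub_le _ _).trans (by linarith)
      simp only [mem_ofPred_eq, φ, Homeomorph.apply_symm_apply, norm_inv]
      exact inv_anti₀ h2 h3
    intro h
    have := closure_minimal hsub hcl h
    simp only [mem_ofPred_eq, Homeomorph.apply_symm_apply, norm_zero] at this
    have : 0 < (2 * R)⁻¹ := by positivity
    linarith
  refine ⟨φ, _, hinj, hφc, rfl, hopen, hpre.image φ (hφc.mono fun x hx => hx.2), hne, hnb, ?_⟩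
  rw [hopen.frontier_eq, hD.frontier_eq]
  ext x
  constructor
  · rintro ⟨hx, hxF⟩
    have hxo : x ≠ eRC.symm 0 := fun h => ho (h ▸ hx)
    refine ⟨ψ x, ⟨?_, fun h => hxF ((hF x).2 ⟨h, hxo⟩)⟩, hφψ x⟩
    have hca : ContinuousAt ψ x := hψc.continuousAt (isOpen_compl_singleton.mem_nhds hxo)
    have := hca.continuousWithinAt.mem_closure_image hx
    refine closure_mono ?_ this
    rintro _ ⟨y, hy, rfl⟩
    exact ((hF y).1 hy).1
  · rintro ⟨y, ⟨hy, hyD⟩, rfl⟩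
    have hyp : y ≠ p := fun h => hyD (h ▸ hp)
    constructor
    · have hca : ContinuousAt φ y := hφc.continuousAt (isOpen_compl_singleton.mem_nhds hyp)
      have hy' : y ∈ closure (D \ {p}) := by
        have h1 : D ⊆ D \ {p} ∪ {p} := by intro z hz; by_cases h : z = p <;> simp [h, hz]
        have := closure_mono h1 hy
        rw [closure_union, closure_singleton] at this
        exact this.resolve_right hyp
      exact hca.continuousWithinAt.mem_closure_image hy'
    · rw [hF, hψφ]
      exact fun h => hyD h.1

def mapE {V : Type u} {G : SimpleGraph V} (E : PlaneEmbedding G) (φ : ℝ × ℝ → ℝ × ℝ)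
    (hφ : Function.Injective φ) (hc : ContinuousOn φ E.drawing) : PlaneEmbedding G where
  pos v := φ (E.pos v)
  pos_inj := hφ.comp E.pos_inj
  arc _ _ h := φ '' E.arc h
  arc_symm _ _ h := by rw [E.arc_symm h]
  arc_curve u v h := by
    obtain ⟨f, hf, hi, h0, h1, he⟩ := E.arc_curve h
    refine ⟨φ ∘ f, ?_, hφ.comp_injOn hi, by simp [h0], by simp [h1], by rw [image_comp, he]⟩
    refine hc.comp hf ?_
    intro t ht
    refine .inr ?_
    simp only [mem_iUnion]
    exact ⟨u, v, h, he ▸ mem_image_of_mem f ht⟩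
  arc_inter u v w z h₁ h₂ hne := by
    rintro _ ⟨⟨x, hx, rfl⟩, ⟨x', hx', he⟩⟩
    rw [hφ he] at hx'
    obtain ⟨h1, h2⟩ := E.arc_inter h₁ h₂ hne ⟨hx, hx'⟩
    simp only [mem_insert_iff, mem_singleton_iff] at h1 h2
    constructor
    · rcases h1 with rfl | rfl <;> simp
    · rcases h2 with h | h <;> simp [h]
  pos_arc u v h w := by
    rintro ⟨x, hx, he⟩
    rw [hφ he] at hx
    exact E.pos_arc h w hx

theorem mapE_cyc {V : Type u} {G : SimpleGraph V} (E : PlaneEmbedding G) (φ : ℝ × ℝ → ℝ × ℝ)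
    (hφ : Function.Injective φ) (hc : ContinuousOn φ E.drawing) {v0 : V} (w : G.Walk v0 v0) :
    cycleDrawing (mapE E φ hφ hc) w = φ '' cycleDrawing E w := by
  ext x
  constructor
  · rintro ⟨a, b, h, he, ⟨y, hy, rfl⟩⟩
    exact ⟨y, ⟨a, b, h, he, hy⟩, rfl⟩
  · rintro ⟨y, ⟨a, b, h, he, hy⟩, rfl⟩
    exact ⟨a, b, h, he, ⟨y, hy, rfl⟩⟩

theorem mapE_drawing {V : Type u} {G : SimpleGraph V} (E : PlaneEmbedding G) (φ : ℝ × ℝ → ℝ × ℝ)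
    (hφ : Function.Injective φ) (hc : ContinuousOn φ E.drawing) :
    (mapE E φ hφ hc).drawing ⊆ φ '' E.drawing := by
  rintro x (⟨v, rfl⟩ | hx)
  · exact ⟨_, .inl ⟨v, rfl⟩, rfl⟩
  · simp only [mem_iUnion] at hx
    obtain ⟨a, b, h, ⟨y, hy, rfl⟩⟩ := hx
    refine ⟨y, .inr ?_, rfl⟩
    simp only [mem_iUnion]
    exact ⟨a, b, h, hy⟩

/-- Every (biconnected) planar graph admits a planar drawing in which
the cycle bounding the outer face has no chords. -/
theorem planar_drawing_chordless_outerface {V : Type u} (G : SimpleGraph V)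
    (hbic : G.IsBiconnected) (hplanar : G.IsPlanar) :
    ∃ (E : PlaneEmbedding G) (v0 : V) (w : G.Walk v0 v0), w.IsCycle ∧
      (∃ F : Set (ℝ × ℝ), E.IsFace F ∧ ¬ Bornology.IsBounded F ∧
        frontier F = cycleDrawing E w) ∧
      (∀ u v : V, u ∈ w.support → v ∈ w.support → G.Adj u v → s(u, v) ∈ w.edges) := by
  obtain ⟨E⟩ := hplanar
  obtain ⟨v0, w, D, hw, hch, hface, hDo, hfr⟩ := exists_face E hbic
  by_cases hb : Bornology.IsBounded D
  swap
  · exact ⟨E, v0, w, hw, ⟨D, hface, hb, hfr⟩, hch⟩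
  obtain ⟨p, hp, hDeq⟩ := hface
  have hpD : p ∈ D := hDeq ▸ mem_connectedComponentIn hp
  have hDc : IsPreconnected D := hDeq ▸ isPreconnected_connectedComponentIn
  have hDsub : D ⊆ E.drawingᶜ := hDeq ▸ connectedComponentIn_subset _ _
  obtain ⟨φ, F, hφ, hφc, hF, hFo, hFc, ⟨z, hz⟩, hFb, hFfr⟩ := inversion hDo hDc hpD hb
  have hc : ContinuousOn φ E.drawing := hφc.mono fun x hx h => hp (h ▸ hx)
  have hfr' : frontier F = cycleDrawing (mapE E φ hφ hc) w := by rw [hFfr, hfr, mapE_cyc]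
  have hFsub : F ⊆ (mapE E φ hφ hc).drawingᶜ := by
    intro x hx hxd
    obtain ⟨y, hy, rfl⟩ := mapE_drawing E φ hφ hc hxd
    rw [hF] at hx
    obtain ⟨y', hy', he⟩ := hx
    exact hDsub hy'.1 (hφ he ▸ hy)
  refine ⟨mapE E φ hφ hc, v0, w, hw, ⟨F, ⟨z, hFsub hz, ?_⟩, hFb, hfr'⟩, hch⟩
  exact eq_comp hFo hFc hz hFsub (hfr'.subset.trans (cyc_sub_drawing _ w))
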